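/- A sequence A(C₁,W₁) → A(C₂,W₂) → A(C₃,W₃) of affine Hopf superalgebras over a field k of characteristic ≠ 2, arising by functoriality from a sequence (C₁,W₁) → (C₂,W₂) → (C₃,W₃) of Harish-Chandra pairs, is short exact if and only if the constituent sequences C₁ → C₂ → C₃ and W₁ → W₂ → W₃ are a short exact sequence of commutative Hopf algebras and a short exact sequence of vector spaces, respectively. -/

import Mathlib

/-!
The proof filters each superalgebra `A` by the powers `Fⁿ = A·A₁ⁿ` of its odd ideal. Since `A` is
finitely generated and super-commutative with `2 ≠ 0`, this ideal is nilpotent, and the associated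
graded algebra is `Ā ⊗ Λ(W)`. Morphisms of Hopf superalgebras respect the filtration and act on the
graded pieces through the maps of Harish-Chandra pairs, so exactness can be compared in both
directions. The isomorphism with `Ā ⊗ Λ(W)` is not constructed; two tools replace it.

* For `v ∈ W*` the coproduct gives a left-invariant odd superderivation `D v` of `A`
  (`BarPairData.D`), which lowers the filtration by one, is natural in `A` (`D_map`), and acts on the
  graded algebra as contraction of forms by `v`.
* For `x ∈ A` the odd element `coinv x = Σ S(x₍₁₎) (x₍₂₎)₁` depends modulo `F²` only on
  `ϖ x ∈ W`, satisfies `D v (coinv x) ≡ v (ϖ x)` modulo `F¹`, and such elements generate the odd ideal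
  modulo `F²` (`fil_one_le`).

Together they show that an element of `F^(n+1)` all of whose contractions lie in `F^(n+1)` is itself in
`F^(n+2)` (`mem_fil_of_D_mem`), also relative to an ideal `K` (`mem_fil_sup_of_D_mem`).

From pairs to superalgebras: by induction on `n` via these criteria, `α₁ a ∈ Fⁿ` forces `a ∈ Fⁿ`, and
`α₂ a ∈ Fⁿ` forces `a ∈ Fⁿ + A₂·α₁(A₁)⁺`. Nilpotency then gives injectivity of `α₁` and the upper
bound for `ker α₂`; surjectivity of `α₂` is Nakayama's argument for generators of the odd ideal.

From superalgebras to pairs: everything about quotients is formal, and the delicate point is that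
injectivity of `α₁` passes to `W₁ → W₂` and `C₁ → C₂`. If the rank of `W₁ → W₂` is `s`, the image of
`α₁` is annihilated by the contractions along a subspace of `W₂*` of codimension `s`, and therefore
meets `F^(s+1)` in zero (`map_eq_zero_of_mem_fil`). With `d = dim W₁`, the top piece `F^d` of `A₁` is a
faithful `Ā₁`-module modulo `F^(d+1)` (`mem_fil_one_of_mul_top`); if `s < d`, or if some `c ∈ A₁` dies
in `C₂`, then `F^d`, respectively `c·F^d`, maps into `F^(s+1)`, hence is zero.
-/

open TensorProduct CategoryTheory

noncomputable section

/-- A Hopf superalgebra over a field `k` (with `char k ≠ 2`), presented as an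
algebra together with even/odd projection operators encoding the `ℤ₂`-grading,
and comultiplication, counit and antipode satisfying the axioms of a
Hopf-algebra object in the symmetric tensor category of super-vector spaces
(the Koszul sign rule being encoded via the odd projections; this encoding is
faithful since `char k ≠ 2`). -/
structure HopfSuperalgebra (k : Type) [Field k] : Type 1 where
  carrier : Type
  [ring : Ring carrier]
  [alg : Algebra k carrier]
  /-- the projection onto the even part -/
  pe : carrier →ₗ[k] carrier
  /-- the projection onto the odd part -/
  po : carrier →ₗ[k] carrier
  pe_add_po : ∀ a, pe a + po a = a
  pe_po : ∀ a, pe (po a) = 0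
  po_pe : ∀ a, po (pe a) = 0
  mul_even_even : ∀ a b, po a = 0 → po b = 0 → po (a * b) = 0
  mul_even_odd : ∀ a b, po a = 0 → pe b = 0 → pe (a * b) = 0
  mul_odd_even : ∀ a b, pe a = 0 → po b = 0 → pe (a * b) = 0
  mul_odd_odd : ∀ a b, pe a = 0 → pe b = 0 → po (a * b) = 0
  one_even : po 1 = 0
  comul : carrier →ₗ[k] carrier ⊗[k] carrier
  counit : carrier →ₗ[k] k
  antipode : carrier →ₗ[k] carrier
  comul_even : ∀ a, po a = 0 →
    comul a = TensorProduct.map pe pe (comul a) + TensorProduct.map po po (comul a)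
  comul_odd : ∀ a, pe a = 0 →
    comul a = TensorProduct.map pe po (comul a) + TensorProduct.map po pe (comul a)
  counit_odd : ∀ a, pe a = 0 → counit a = 0
  antipode_pe : ∀ a, antipode (pe a) = pe (antipode a)
  coassoc : ∀ a, (TensorProduct.assoc k carrier carrier carrier)
      ((TensorProduct.map comul LinearMap.id) (comul a)) =
      (TensorProduct.map LinearMap.id comul) (comul a)
  counit_comul : ∀ a,
    (TensorProduct.lid k carrier) ((TensorProduct.map counit LinearMap.id) (comul a)) = a
  comul_counit : ∀ a,
    (TensorProduct.rid k carrier) ((TensorProduct.map LinearMap.id counit) (comul a)) = a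
  comul_one : comul 1 = 1 ⊗ₜ[k] 1
  /-- `Δ` is an algebra map for the super (sign-twisted) multiplication of
  `A ⊗ A`: since `(a⊗b)·(c⊗d) = (-1)^{|b||c|} ac ⊗ bd`, the sign twist amounts
  to the correction term `-2·((1⊗po)Δa)·((po⊗1)Δb)`. -/
  comul_mul : ∀ a b, comul (a * b) =
      comul a * comul b -
        (2 : k) • ((TensorProduct.map LinearMap.id po) (comul a) *
          (TensorProduct.map po LinearMap.id) (comul b))
  counit_one : counit 1 = 1
  counit_mul : ∀ a b, counit (a * b) = counit a * counit b
  antipode_comul : ∀ a, (LinearMap.mul' k carrier)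
      ((TensorProduct.map antipode LinearMap.id) (comul a)) = algebraMap k carrier (counit a)
  comul_antipode : ∀ a, (LinearMap.mul' k carrier)
      ((TensorProduct.map LinearMap.id antipode) (comul a)) = algebraMap k carrier (counit a)

attribute [instance] HopfSuperalgebra.ring HopfSuperalgebra.alg

namespace HopfSuperalgebra

variable {k : Type} [Field k] (H : HopfSuperalgebra k)

/-- super-commutativity: even elements are central, odd elements anticommute. -/
def IsSuperCommutative : Prop :=
  (∀ a b : H.carrier, H.po a = 0 → a * b = b * a) ∧
  (∀ a b : H.carrier, H.pe a = 0 → H.pe b = 0 → a * b = -(b * a))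

/-- the super-symmetry `c(v ⊗ w) = (-1)^{|v||w|} w ⊗ v` on `H ⊗ H`. -/
def superSwap : H.carrier ⊗[k] H.carrier →ₗ[k] H.carrier ⊗[k] H.carrier :=
  (TensorProduct.comm k H.carrier H.carrier).toLinearMap ∘ₗ
    (LinearMap.id - (2 : k) • TensorProduct.map H.po H.po)

def IsSuperCocommutative : Prop := ∀ a, H.superSwap (H.comul a) = H.comul a

/-- the primitive elements `{u | Δu = 1⊗u + u⊗1}`. -/
def primitives : Submodule k H.carrier :=
  LinearMap.ker (H.comul -
    ((TensorProduct.mk k H.carrier H.carrier) 1 +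
      (TensorProduct.mk k H.carrier H.carrier).flip 1))

def IsPurelyEven : Prop := ∀ a, H.po a = 0

/-- the convolution product of two linear functionals on `H`. -/
def conv (f g : H.carrier →ₗ[k] k) : H.carrier →ₗ[k] k :=
  LinearMap.mul' k k ∘ₗ TensorProduct.map f g ∘ₗ H.comul

/-- the largest purely even subcoalgebra `H̲ = Δ⁻¹(H₀ ⊗ H₀)`. -/
def underline : Submodule k H.carrier :=
  Submodule.comap H.comul (LinearMap.range
    (TensorProduct.map (LinearMap.ker H.po).subtype (LinearMap.ker H.po).subtype))

/-- the odd primitives `V_H = P(H)₁`. -/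
def oddPrimitives : Submodule k H.carrier := H.primitives ⊓ LinearMap.ker H.pe

end HopfSuperalgebra

/-- A subspace `D` of a coalgebra with comultiplication `Δ` is a subcoalgebra
if `Δ(D) ⊆ D ⊗ D`. -/
def IsSubcoalgebraOf {k M : Type} [Field k] [AddCommGroup M] [Module k M]
    (Δ : M →ₗ[k] M ⊗[k] M) (D : Submodule k M) : Prop :=
  ∀ a ∈ D, Δ a ∈ LinearMap.range (TensorProduct.map D.subtype D.subtype)

/-- The coradical of a coalgebra: the sum of all its simple subcoalgebras. -/
def coradicalOf {k M : Type} [Field k] [AddCommGroup M] [Module k M]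
    (Δ : M →ₗ[k] M ⊗[k] M) : Submodule k M :=
  sSup {D | IsSubcoalgebraOf Δ D ∧ D ≠ ⊥ ∧
    ∀ E : Submodule k M, E ≤ D → IsSubcoalgebraOf Δ E → E = ⊥ ∨ E = D}

namespace HopfSuperalgebra

variable {k : Type} [Field k] (H : HopfSuperalgebra k)

/-- a Hopf superalgebra is irreducible if its coradical is `k·1`. -/
def IsIrreducible : Prop := coradicalOf H.comul = Submodule.span k {(1 : H.carrier)}

/-- cosemisimplicity: the coradical is everything; equivalently all
super-comodules are semisimple, i.e. `SSp H` is linearly reductive. -/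
def IsCosemisimple : Prop := coradicalOf H.comul = (⊤ : Submodule k H.carrier)

/-- connectedness of `Spec A₀`: the only even idempotents are `0` and `1`. -/
def IsConnected : Prop :=
  ∀ a : H.carrier, H.po a = 0 → a * a = a → a = 0 ∨ a = 1

/-- Morphisms of Hopf superalgebras. -/
@[ext]
structure Hom (H K : HopfSuperalgebra k) : Type where
  toLinearMap : H.carrier →ₗ[k] K.carrier
  map_one' : toLinearMap 1 = 1
  map_mul' : ∀ a b, toLinearMap (a * b) = toLinearMap a * toLinearMap b
  map_pe' : ∀ a, toLinearMap (H.pe a) = K.pe (toLinearMap a)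
  map_comul' : ∀ a, K.comul (toLinearMap a) =
    TensorProduct.map toLinearMap toLinearMap (H.comul a)
  map_counit' : ∀ a, K.counit (toLinearMap a) = H.counit a

instance : Category (HopfSuperalgebra k) where
  Hom A B := Hom A B
  id A :=
    { toLinearMap := LinearMap.id
      map_one' := rfl
      map_mul' := fun _ _ => rfl
      map_pe' := fun _ => rfl
      map_comul' := fun a => by simp
      map_counit' := fun _ => rfl }
  comp {X Y Z} f g :=
    { toLinearMap := g.toLinearMap ∘ₗ f.toLinearMap
      map_one' := by simp [f.map_one', g.map_one']
      map_mul' := fun a b => by simp [f.map_mul', g.map_mul']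
      map_pe' := fun a => by simp [f.map_pe', g.map_pe']
      map_comul' := fun a => by
        simp only [LinearMap.coe_comp, Function.comp_apply, g.map_comul', f.map_comul',
          TensorProduct.map_comp, LinearMap.comp_apply]
      map_counit' := fun a => by simp [f.map_counit', g.map_counit'] }
  id_comp f := by apply Hom.ext; rfl
  comp_id f := by apply Hom.ext; rfl
  assoc f g h := by apply Hom.ext; rfl

end HopfSuperalgebra

section HCPsec

variable {k : Type} [Field k]

/-- the transpose of a right `C`-coaction on `W`: the right action
`(v ◁ f)(w) = Σ v(w₍₀₎) f(w₍₁₎)` of a functional `f` on `W*`. -/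
def tAct {W C : Type} [AddCommGroup W] [Module k W] [AddCommGroup C] [Module k C]
    (coact : W →ₗ[k] W ⊗[k] C) (v : W →ₗ[k] k) (f : C →ₗ[k] k) : W →ₗ[k] k :=
  LinearMap.mul' k k ∘ₗ TensorProduct.map v f ∘ₗ coact

/-- A Harish-Chandra pair: an affine (finitely generated commutative) Hopf
algebra `C`, a finite-dimensional right `C`-comodule `W`, and a bracket
`W* × W* → P(C°)` with values in the `ε`-derivations (= primitives of the dual
Hopf algebra `C°`), making `(C°, W*)` a dual Harish-Chandra pair.  The
conditions involving the coalgebra structure of `C°` are stated via arbitrary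
finite representations of the relevant comultiplications. -/
structure HCP (k : Type) [Field k] : Type 1 where
  C : Type
  [crC : CommRing C]
  [hopfC : HopfAlgebra k C]
  fgC : Algebra.FiniteType k C
  W : Type
  [acgW : AddCommGroup W]
  [modW : Module k W]
  fdW : FiniteDimensional k W
  coact : W →ₗ[k] W ⊗[k] C
  coact_counit : ∀ w, (TensorProduct.rid k W)
    ((TensorProduct.map LinearMap.id (Coalgebra.counit (R := k))) (coact w)) = w
  coact_coassoc : ∀ w,
    (TensorProduct.assoc k W C C) ((TensorProduct.map coact LinearMap.id) (coact w)) =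
    (TensorProduct.map LinearMap.id (Coalgebra.comul (R := k))) (coact w)
  bracket : (W →ₗ[k] k) →ₗ[k] (W →ₗ[k] k) →ₗ[k] (C →ₗ[k] k)
  /-- the bracket takes values in the primitives of `C°`, i.e. `ε`-derivations. -/
  bracket_der : ∀ u v (a b : C),
    bracket u v (a * b) = bracket u v a * Coalgebra.counit (R := k) b +
      Coalgebra.counit (R := k) a * bracket u v b
  /-- condition (b). -/
  bracket_symm : ∀ u v, bracket u v = bracket v u
  /-- condition (c). -/
  act_bracket_self : ∀ v : W →ₗ[k] k, tAct coact v (bracket v v) = 0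
  /-- condition (a) for `(C°, W*)`, stated for arbitrary finite representations
  `Δ°f = Σᵢ gᵢ ⊗ hᵢ` (i.e. `f(xy) = Σᵢ gᵢ(x)hᵢ(y)`) and `Δ²c = Σⱼ pⱼ⊗qⱼ⊗rⱼ`:
  `Σ [u◁f₍₁₎, v◁f₍₂₎] = Σ S°(f₍₁₎)·[u,v]·f₍₂₎` in `C°`. -/
  equivariance : ∀ (u v : W →ₗ[k] k) (f : C →ₗ[k] k) (n : ℕ)
      (g h : Fin n → (C →ₗ[k] k)),
    (∀ x y : C, f (x * y) = ∑ i, g i x * h i y) →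
    ∀ (c : C) (m : ℕ) (p q r : Fin m → C),
      ((TensorProduct.map LinearMap.id (Coalgebra.comul (R := k)))
        (Coalgebra.comul (R := k) c) = ∑ j, p j ⊗ₜ[k] (q j ⊗ₜ[k] r j)) →
      (∑ i, bracket (tAct coact u (g i)) (tAct coact v (h i))) c =
      ∑ j, f (HopfAlgebra.antipode (R := k) (p j) * r j) * bracket u v (q j)

attribute [instance] HCP.crC HCP.hopfC HCP.acgW HCP.modW

namespace HCP

/-- morphisms of Harish-Chandra pairs: a Hopf algebra map and a linear map
whose duals give a morphism of the associated dual Harish-Chandra pairs. -/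
@[ext]
structure Hom (P Q : HCP k) : Type where
  fC : P.C →ₗ[k] Q.C
  gW : P.W →ₗ[k] Q.W
  fC_one : fC 1 = 1
  fC_mul : ∀ a b, fC (a * b) = fC a * fC b
  fC_comul : ∀ a, Coalgebra.comul (R := k) (fC a) =
    TensorProduct.map fC fC (Coalgebra.comul (R := k) a)
  fC_counit : ∀ a, Coalgebra.counit (R := k) (fC a) = Coalgebra.counit (R := k) a
  act_compat : ∀ (v : Q.W →ₗ[k] k) (f : Q.C →ₗ[k] k),
    (tAct Q.coact v f) ∘ₗ gW = tAct P.coact (v ∘ₗ gW) (f ∘ₗ fC)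
  bracket_compat : ∀ u v : Q.W →ₗ[k] k,
    (Q.bracket u v) ∘ₗ fC = P.bracket (u ∘ₗ gW) (v ∘ₗ gW)

instance : Category (HCP k) where
  Hom P Q := Hom P Q
  id P :=
    { fC := LinearMap.id
      gW := LinearMap.id
      fC_one := rfl
      fC_mul := fun _ _ => rfl
      fC_comul := fun a => by simp
      fC_counit := fun _ => rfl
      act_compat := fun v f => rfl
      bracket_compat := fun u v => rfl }
  comp {X Y Z} f g :=
    { fC := g.fC ∘ₗ f.fC
      gW := g.gW ∘ₗ f.gW
      fC_one := by simp [f.fC_one, g.fC_one]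
      fC_mul := fun a b => by simp [f.fC_mul, g.fC_mul]
      fC_comul := fun a => by
        simp only [LinearMap.coe_comp, Function.comp_apply, g.fC_comul, f.fC_comul,
          TensorProduct.map_comp, LinearMap.comp_apply]
      fC_counit := fun a => by simp [f.fC_counit, g.fC_counit]
      act_compat := fun v h => by
        rw [← LinearMap.comp_assoc, g.act_compat, f.act_compat, LinearMap.comp_assoc,
          LinearMap.comp_assoc]
      bracket_compat := fun u v => by
        rw [← LinearMap.comp_assoc, g.bracket_compat, f.bracket_compat, LinearMap.comp_assoc,
          LinearMap.comp_assoc] }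
  id_comp f := by apply Hom.ext <;> rfl
  comp_id f := by apply Hom.ext <;> rfl
  assoc f g h := by apply Hom.ext <;> rfl

end HCP

namespace HopfSuperalgebra

variable (A : HopfSuperalgebra k)

/-- the right adjoint coaction `a ↦ Σ a₍₂₎ ⊗ S(a₍₁₎)a₍₃₎`. -/
def adjCoact : A.carrier →ₗ[k] A.carrier ⊗[k] A.carrier :=
  TensorProduct.map LinearMap.id
      (LinearMap.mul' k A.carrier ∘ₗ TensorProduct.map A.antipode LinearMap.id) ∘ₗ
    (TensorProduct.assoc k A.carrier A.carrier A.carrier).toLinearMap ∘ₗ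
    (TensorProduct.map (TensorProduct.comm k A.carrier A.carrier).toLinearMap LinearMap.id) ∘ₗ
    (TensorProduct.assoc k A.carrier A.carrier A.carrier).symm.toLinearMap ∘ₗ
    (TensorProduct.map LinearMap.id A.comul) ∘ₗ A.comul

/-- the super-ideal `I_A = A·A₁` generated by the odd part. -/
def oddIdeal : Submodule k A.carrier :=
  Submodule.span k {x | ∃ a b, A.pe b = 0 ∧ x = a * b}

end HopfSuperalgebra

/-- Data realizing the Harish-Chandra pair `(Ā, W^A)` associated with the
super-commutative Hopf superalgebra `A` as the Harish-Chandra pair `P`: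
`π : A → P.C` realizes the quotient Hopf algebra `Ā = A/A·A₁`, `ϖ : A → P.W`
realizes `W^A = (A⁺/(A⁺)²)₁ = A₁/A₀⁺A₁` with the adjoint coaction, and the
bracket of `P` corresponds to the super-commutator (convolution) of odd
primitives of `A°`. -/
structure BarPairData (A : HopfSuperalgebra k) (P : HCP k) : Type where
  π : A.carrier →ₗ[k] P.C
  ϖ : A.carrier →ₗ[k] P.W
  π_surj : Function.Surjective π
  π_ker : LinearMap.ker π = A.oddIdeal
  π_one : π 1 = 1
  π_mul : ∀ a b, π (a * b) = π a * π b
  π_comul : ∀ a, Coalgebra.comul (R := k) (π a) = TensorProduct.map π π (A.comul a)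
  π_counit : ∀ a, Coalgebra.counit (R := k) (π a) = A.counit a
  ϖ_surj : Function.Surjective ϖ
  ϖ_ker : LinearMap.ker ϖ = LinearMap.ker A.po ⊔ Submodule.span k
    {x | ∃ b c, A.po b = 0 ∧ A.counit b = 0 ∧ A.pe c = 0 ∧ x = b * c}
  ϖ_coact : ∀ a, P.coact (ϖ a) = TensorProduct.map ϖ π (A.adjCoact a)
  bracket_eq : ∀ u v : P.W →ₗ[k] k, (P.bracket u v) ∘ₗ π =
    A.conv (u ∘ₗ ϖ) (v ∘ₗ ϖ) + A.conv (v ∘ₗ ϖ) (u ∘ₗ ϖ)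

/-- `A` realizes the affine Hopf superalgebra `A(C,W)` associated with the
Harish-Chandra pair `P`, i.e. `(Ā, W^A) ≅ P`. -/
def RealizesBarPair (A : HopfSuperalgebra k) (P : HCP k) : Prop :=
  Nonempty (BarPairData A P)

end HCPsec

/-! ### Filtration by powers of the odd ideal -/

namespace HopfSuperalgebra

variable {k : Type} [Field k] (A : HopfSuperalgebra k)

/-- The odd part `A₁` of `A`. -/
def oddPart : Submodule k A.carrier := LinearMap.ker A.pe

/-- The filtration `F n = A · A₁ⁿ` of `A` by powers of the super-ideal generated by `A₁`. -/
def fil (n : ℕ) : Submodule k A.carrier := ⊤ * A.oddPart ^ n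

/-- The parity automorphism `a ↦ (-1)^{|a|} a`. -/
def sgn : A.carrier →ₗ[k] A.carrier := A.pe - A.po

variable {A}

lemma po_eq (a : A.carrier) : A.po a = a - A.pe a := by
  rw [eq_sub_iff_add_eq, add_comm]; exact A.pe_add_po a

lemma pe_pe (a : A.carrier) : A.pe (A.pe a) = A.pe a := by
  have := A.pe_add_po (A.pe a)
  rwa [A.po_pe, add_zero] at this

lemma po_po (a : A.carrier) : A.po (A.po a) = A.po a := by
  have := A.pe_add_po (A.po a)
  rwa [A.pe_po, zero_add] at this

lemma mem_oddPart {a : A.carrier} : a ∈ A.oddPart ↔ A.pe a = 0 := Iff.rfl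

lemma po_mem_oddPart (a : A.carrier) : A.po a ∈ A.oddPart := A.pe_po a

lemma po_of_odd {a : A.carrier} (h : A.pe a = 0) : A.po a = a := by
  rw [po_eq, h, sub_zero]

lemma pe_of_even {a : A.carrier} (h : A.po a = 0) : A.pe a = a := by
  have := A.pe_add_po a
  rwa [h, add_zero] at this

lemma pe_mul (a b : A.carrier) : A.pe (a * b) = A.pe a * A.pe b + A.po a * A.po b := by
  have h : a * b = (A.pe a * A.pe b + A.po a * A.po b) +
      (A.pe a * A.po b + A.po a * A.pe b) := by
    conv_lhs => rw [← A.pe_add_po a, ← A.pe_add_po b]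
    noncomm_ring
  rw [h, map_add, map_add, map_add,
    pe_of_even (A.mul_even_even _ _ (A.po_pe a) (A.po_pe b)),
    pe_of_even (A.mul_odd_odd _ _ (A.pe_po a) (A.pe_po b)),
    A.mul_even_odd _ _ (A.po_pe a) (A.pe_po b), A.mul_odd_even _ _ (A.pe_po a) (A.po_pe b)]
  simp

lemma po_mul (a b : A.carrier) : A.po (a * b) = A.pe a * A.po b + A.po a * A.pe b := by
  rw [po_eq, pe_mul]
  conv_lhs => rw [← A.pe_add_po a, ← A.pe_add_po b]
  simp only [map_add, pe_pe, po_po, A.pe_po, A.po_pe]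
  noncomm_ring

lemma sgn_mul (a b : A.carrier) : A.sgn (a * b) = A.sgn a * A.sgn b := by
  simp only [sgn, LinearMap.sub_apply, pe_mul, po_mul]
  noncomm_ring

lemma sgn_of_odd {a : A.carrier} (h : A.pe a = 0) : A.sgn a = -a := by
  simp [sgn, h, po_of_odd h]

lemma sgn_sgn (a : A.carrier) : A.sgn (A.sgn a) = a := by
  simp only [sgn, LinearMap.sub_apply, map_sub, pe_pe, po_po, A.pe_po, A.po_pe]
  rw [sub_zero, zero_sub, sub_neg_eq_add, A.pe_add_po]

lemma counit_po (a : A.carrier) : A.counit (A.po a) = 0 := A.counit_odd _ (A.pe_po a)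

lemma counit_pe (a : A.carrier) : A.counit (A.pe a) = A.counit a := by
  conv_rhs => rw [← A.pe_add_po a, map_add, counit_po, add_zero]

lemma IsSuperCommutative.odd_sq (hs : A.IsSuperCommutative) (h2 : (2 : k) ≠ 0)
    {a : A.carrier} (h : A.pe a = 0) : a * a = 0 := by
  have h1 := hs.2 a a h h
  have h3 : (2 : k) • (a * a) = 0 := by rw [two_smul]; nth_rewrite 1 [h1]; simp
  exact (smul_eq_zero.1 h3).resolve_left h2

/-- Supercommutativity, with the Koszul sign of moving an odd element to the left. -/
lemma IsSuperCommutative.mul_odd (hs : A.IsSuperCommutative) (a : A.carrier)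
    {b : A.carrier} (h : A.pe b = 0) : a * b = b * A.sgn a := by
  conv_lhs => rw [← A.pe_add_po a, add_mul, hs.1 _ b (A.po_pe a), hs.2 _ b (A.pe_po a) h]
  rw [sgn, LinearMap.sub_apply, mul_sub, sub_eq_add_neg]

lemma fil_zero : A.fil 0 = ⊤ := by simp [fil]

lemma fil_succ (n : ℕ) : A.fil (n + 1) = A.fil n * A.oddPart := by
  rw [fil, fil, pow_succ, mul_assoc]

lemma top_mul_top' : (⊤ : Submodule k A.carrier) * ⊤ = ⊤ := by
  refine eq_top_iff.2 fun x _ => ?_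
  simpa using Submodule.mul_mem_mul (Submodule.mem_top (x := x)) (Submodule.mem_top (x := 1))

lemma IsSuperCommutative.commute_top (hs : A.IsSuperCommutative) {X : Submodule k A.carrier}
    (hX : X ≤ A.oddPart) : Commute (⊤ : Submodule k A.carrier) X := by
  apply le_antisymm
  · refine Submodule.mul_le.2 fun a _ b hb => ?_
    rw [hs.mul_odd a (hX hb)]
    exact Submodule.mul_mem_mul hb trivial
  · refine Submodule.mul_le.2 fun b hb a _ => ?_
    have := hs.mul_odd (A.sgn a) (hX hb)
    rw [sgn_sgn] at this
    rw [← this]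
    exact Submodule.mul_mem_mul trivial hb

lemma IsSuperCommutative.fil_mul_fil (hs : A.IsSuperCommutative) (m n : ℕ) :
    A.fil m * A.fil n = A.fil (m + n) := by
  have h : Commute (⊤ : Submodule k A.carrier) (A.oddPart ^ m) :=
    (hs.commute_top le_rfl).pow_right m
  rw [fil, fil, fil, pow_add, mul_assoc, ← mul_assoc (A.oddPart ^ m), ← h.eq, ← mul_assoc,
    ← mul_assoc, top_mul_top', mul_assoc]

lemma IsSuperCommutative.mul_mem_fil (hs : A.IsSuperCommutative) {m n : ℕ} {a b : A.carrier}
    (ha : a ∈ A.fil m) (hb : b ∈ A.fil n) : a * b ∈ A.fil (m + n) :=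
  hs.fil_mul_fil m n ▸ Submodule.mul_mem_mul ha hb

lemma mem_fil_zero (a : A.carrier) : a ∈ A.fil 0 := fil_zero (A := A) ▸ Submodule.mem_top

lemma mul_mem_fil_left (a : A.carrier) {n : ℕ} {b : A.carrier}
    (hb : b ∈ A.fil n) : a * b ∈ A.fil n := by
  have h : (⊤ : Submodule k A.carrier) * A.fil n = A.fil n := by
    rw [fil, ← mul_assoc, top_mul_top']
  exact h ▸ Submodule.mul_mem_mul Submodule.mem_top hb

lemma IsSuperCommutative.mul_mem_fil_right (hs : A.IsSuperCommutative) (a : A.carrier) {n : ℕ}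
    {b : A.carrier} (hb : b ∈ A.fil n) : b * a ∈ A.fil n := by
  simpa using hs.mul_mem_fil hb (mem_fil_zero a)

lemma IsSuperCommutative.fil_anti_succ (hs : A.IsSuperCommutative) (n : ℕ) :
    A.fil (n + 1) ≤ A.fil n := by
  rw [fil_succ]
  exact Submodule.mul_le.2 fun a ha b _ => hs.mul_mem_fil_right b ha

lemma IsSuperCommutative.fil_anti (hs : A.IsSuperCommutative) : Antitone A.fil :=
  antitone_nat_of_succ_le hs.fil_anti_succ

lemma mem_fil_one {a : A.carrier} (h : A.pe a = 0) : a ∈ A.fil 1 := by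
  rw [fil, pow_one]
  simpa using Submodule.mul_mem_mul (Submodule.mem_top (x := (1 : A.carrier)))
    (mem_oddPart.2 h)

lemma mul_mem_fil_succ {n : ℕ} {a b : A.carrier} (ha : a ∈ A.fil n) (h : A.pe b = 0) :
    a * b ∈ A.fil (n + 1) := fil_succ (A := A) n ▸ Submodule.mul_mem_mul ha h

lemma sgn_mem_fil {n : ℕ} {a : A.carrier} (ha : a ∈ A.fil n) : A.sgn a ∈ A.fil n := by
  induction n generalizing a with
  | zero => exact mem_fil_zero _
  | succ n ih =>
    rw [fil_succ] at ha
    induction ha using Submodule.mul_induction_on' with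
    | mem_mul_mem a ha b hb =>
      rw [sgn_mul, sgn_of_odd hb, mul_neg]
      exact neg_mem (mul_mem_fil_succ (ih ha) hb)
    | add x _ y _ hx hy => rw [map_add]; exact add_mem hx hy

lemma oddIdeal_eq : A.oddIdeal = A.fil 1 := by
  apply le_antisymm
  · refine Submodule.span_le.2 ?_
    rintro _ ⟨a, b, hb, rfl⟩
    exact mul_mem_fil_left a (mem_fil_one hb)
  · rw [fil, pow_one]
    exact Submodule.mul_le.2 fun a _ b hb => Submodule.subset_span ⟨a, b, hb, rfl⟩

/-- A finitely generated super-commutative superalgebra has nilpotent odd ideal: it is a finite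
sum of the commuting ideals `A·xᵢ`, `xᵢ` odd, each of square zero. -/
lemma IsSuperCommutative.exists_fil_eq_bot (hs : A.IsSuperCommutative) (h2 : (2 : k) ≠ 0)
    (hfg : Algebra.FiniteType k A.carrier) : ∃ N, A.fil N = ⊥ := by
  obtain ⟨s, hsp⟩ := hfg.out
  let f : A.carrier → Submodule k A.carrier := fun x => ⊤ * Submodule.span k {A.po x}
  have hle : ∀ x, Submodule.span k {A.po x} ≤ A.oddPart := fun x =>
    (Submodule.span_singleton_le_iff_mem _ _).2 (po_mem_oddPart x)
  have hcomm : ∀ x y, Commute (f x) (f y) := by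
    intro x y
    have h1 := hs.commute_top (hle x)
    have h2 := hs.commute_top (hle y)
    have h3 : Commute (Submodule.span k {A.po x}) (Submodule.span k {A.po y}) := by
      change _ * _ = _ * _
      rw [Submodule.span_mul_span, Submodule.span_mul_span, Set.singleton_mul_singleton,
        Set.singleton_mul_singleton, hs.2 _ _ (A.pe_po x) (A.pe_po y), ← Set.neg_singleton,
        Submodule.span_neg]
    exact ((Commute.refl _).mul_right h2).mul_left ((h1.symm.mul_right h3))
  have hnil : ∀ x, IsNilpotent (f x) := by
    intro x
    refine ⟨2, ?_⟩
    have h1 := hs.commute_top (hle x)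
    rw [h1.mul_pow, pow_two (Submodule.span _ _), Submodule.span_mul_span,
      Set.singleton_mul_singleton, hs.odd_sq h2 (A.pe_po x)]
    simp
  have hsum : IsNilpotent (∑ x ∈ s, f x) :=
    Commute.isNilpotent_sum (fun x _ => hnil x) fun x y _ _ => hcomm x y
  have hl : ∀ x, ∀ a, ∀ b ∈ f x, a * b ∈ f x := by
    intro x a b hb
    have h : (⊤ : Submodule k A.carrier) * f x = f x := by
      change ⊤ * (⊤ * _) = _
      rw [← mul_assoc, top_mul_top']
    exact h ▸ Submodule.mul_mem_mul Submodule.mem_top hb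
  have hr : ∀ x, ∀ a, ∀ b ∈ f x, b * a ∈ f x := by
    intro x a b hb
    have h : f x * (⊤ : Submodule k A.carrier) = f x := by
      change (⊤ * _) * ⊤ = _
      rw [mul_assoc, ← (hs.commute_top (hle x)).eq, ← mul_assoc, top_mul_top']
    exact h ▸ Submodule.mul_mem_mul hb Submodule.mem_top
  set J := ∑ x ∈ s, f x with hJ
  have hJl : ∀ a, ∀ b ∈ J, a * b ∈ J := by
    intro a b hb
    have : (⊤ : Submodule k A.carrier) * J ≤ J := by
      rw [hJ, Finset.mul_sum]
      refine Finset.sum_le_sum fun x _ => Submodule.mul_le.2 fun a _ b hb => hl x a b hb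
    exact this (Submodule.mul_mem_mul trivial hb)
  have hJr : ∀ a, ∀ b ∈ J, b * a ∈ J := by
    intro a b hb
    have : J * (⊤ : Submodule k A.carrier) ≤ J := by
      rw [hJ, Finset.sum_mul]
      refine Finset.sum_le_sum fun x _ => Submodule.mul_le.2 fun a ha b _ => hr x b a ha
    exact this (Submodule.mul_mem_mul hb trivial)
  have hpo : ∀ a, A.po a ∈ J := by
    intro a
    have ha : a ∈ Algebra.adjoin k (s : Set A.carrier) := hsp ▸ trivial
    induction ha using Algebra.adjoin_induction with
    | mem x hx =>
      have h1 : f x ≤ J := Finset.single_le_sum (fun _ _ => bot_le) hx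
      apply h1
      simpa using Submodule.mul_mem_mul (Submodule.mem_top (x := (1 : A.carrier)))
        (Submodule.mem_span_singleton_self (R := k) (A.po x))
    | algebraMap r =>
      rw [Algebra.algebraMap_eq_smul_one, map_smul, A.one_even, smul_zero]
      exact zero_mem _
    | add x y _ _ hx hy => rw [map_add]; exact add_mem hx hy
    | mul x y _ _ hx hy =>
      rw [po_mul]
      exact add_mem (hJl _ _ hy) (hJr _ _ hx)
  have hOJ : A.oddPart ≤ J := fun a ha => by
    rw [← po_of_odd (mem_oddPart.1 ha)]; exact hpo a
  obtain ⟨N, hN⟩ := hsum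
  refine ⟨N, ?_⟩
  have h1 : A.oddPart ^ N = ⊥ := by
    rw [eq_bot_iff, ← Submodule.zero_eq_bot, ← hN]
    exact pow_le_pow_left' hOJ N
  rw [fil, h1, Submodule.mul_bot]

end HopfSuperalgebra

/-! ### Superderivations attached to functionals on `W` -/

namespace BarPairData
open HopfSuperalgebra

variable {k : Type} [Field k] {A : HopfSuperalgebra k} {P : HCP k} (d : BarPairData A P)

lemma pi_eq_zero_iff {a : A.carrier} : d.π a = 0 ↔ a ∈ A.fil 1 := by
  rw [← oddIdeal_eq, ← d.π_ker, LinearMap.mem_ker]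

lemma pi_eq_iff {a b : A.carrier} : d.π a = d.π b ↔ a - b ∈ A.fil 1 := by
  rw [← d.pi_eq_zero_iff, map_sub, sub_eq_zero]

lemma pi_odd {a : A.carrier} (h : A.pe a = 0) : d.π a = 0 :=
  d.pi_eq_zero_iff.2 (mem_fil_one h)

lemma pi_po (a : A.carrier) : d.π (A.po a) = 0 := d.pi_odd (A.pe_po a)

lemma pi_pe (a : A.carrier) : d.π (A.pe a) = d.π a := by
  conv_rhs => rw [← A.pe_add_po a, map_add, d.pi_po, add_zero]

lemma varpi_even {a : A.carrier} (h : A.po a = 0) : d.ϖ a = 0 := by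
  have : a ∈ LinearMap.ker d.ϖ := by
    rw [d.ϖ_ker]
    exact Submodule.mem_sup_left h
  exact this

lemma varpi_pe (a : A.carrier) : d.ϖ (A.pe a) = 0 := d.varpi_even (A.po_pe a)

lemma varpi_po (a : A.carrier) : d.ϖ (A.po a) = d.ϖ a := by
  conv_rhs => rw [← A.pe_add_po a, map_add, d.varpi_pe, zero_add]

lemma varpi_even_mul_odd {b c : A.carrier} (hb : A.po b = 0) (hc : A.pe c = 0) :
    d.ϖ (b * c) = A.counit b • d.ϖ c := by
  have : (b - A.counit b • 1) * c ∈ LinearMap.ker d.ϖ := by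
    rw [d.ϖ_ker]
    refine Submodule.mem_sup_right (Submodule.subset_span ⟨_, c, ?_, ?_, hc, rfl⟩)
    · rw [map_sub, hb, map_smul, A.one_even, smul_zero, sub_zero]
    · rw [map_sub, map_smul, A.counit_one, smul_eq_mul, mul_one, sub_self]
  rw [LinearMap.mem_ker, sub_mul, smul_mul_assoc, one_mul, map_sub, map_smul, sub_eq_zero] at this
  exact this

/-- `ϖ` is an `ε`-derivation `A → W`. -/
lemma varpi_mul (hs : A.IsSuperCommutative) (a b : A.carrier) :
    d.ϖ (a * b) = A.counit a • d.ϖ b + A.counit b • d.ϖ a := by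
  rw [← d.varpi_po (a * b), po_mul, map_add, d.varpi_even_mul_odd (A.po_pe a) (A.pe_po b),
    ← hs.1 _ _ (A.po_pe b), d.varpi_even_mul_odd (A.po_pe b) (A.pe_po a), counit_pe, counit_pe,
    d.varpi_po, d.varpi_po]

/-- Contraction of the second tensor factor by `v ∘ ϖ`. -/
def contr (v : P.W →ₗ[k] k) : A.carrier ⊗[k] A.carrier →ₗ[k] A.carrier :=
  (TensorProduct.rid k A.carrier).toLinearMap ∘ₗ TensorProduct.map LinearMap.id (v ∘ₗ d.ϖ)

@[simp] lemma contr_tmul (v : P.W →ₗ[k] k) (a b : A.carrier) :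
    d.contr v (a ⊗ₜ b) = v (d.ϖ b) • a := by
  simp [contr]

/-- The left-invariant odd superderivation `a ↦ Σ a₍₁₎ v(ϖ a₍₂₎)` of `A` attached to `v ∈ W*`. -/
def D (v : P.W →ₗ[k] k) : A.carrier →ₗ[k] A.carrier := d.contr v ∘ₗ A.comul

lemma D_add (u v : P.W →ₗ[k] k) (a : A.carrier) : d.D (u + v) a = d.D u a + d.D v a := by
  simp only [D, LinearMap.comp_apply]
  induction A.comul a using TensorProduct.induction_on with
  | zero => simp
  | tmul x y => simp [add_smul]
  | add x y hx hy => simp only [map_add, hx, hy]; abel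

lemma D_smul (c : k) (v : P.W →ₗ[k] k) (a : A.carrier) : d.D (c • v) a = c • d.D v a := by
  simp only [D, LinearMap.comp_apply]
  induction A.comul a using TensorProduct.induction_on with
  | zero => simp
  | tmul x y => simp [mul_smul]
  | add x y hx hy => simp only [map_add, hx, hy, smul_add]

lemma D_zero (a : A.carrier) : d.D 0 a = 0 := by
  simpa using d.D_smul 0 0 a

/-- Contraction of a product of the sign-twisted algebra `A ⊗ A`; the `-2` term is the correction that
turns the ordinary product into the twisted one. -/
lemma contr_mul (hs : A.IsSuperCommutative) (v : P.W →ₗ[k] k) (X Y : A.carrier ⊗[k] A.carrier) :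
    d.contr v (X * Y - (2 : k) • (TensorProduct.map LinearMap.id A.po X *
      TensorProduct.map A.po LinearMap.id Y)) =
    TensorProduct.rid k _ (TensorProduct.map LinearMap.id A.counit X) * d.contr v Y +
      d.contr v X * A.sgn (TensorProduct.rid k _ (TensorProduct.map LinearMap.id A.counit Y)) := by
  induction X using TensorProduct.induction_on with
  | zero => simp
  | add X X' h h' =>
    simp only [map_add, add_mul, smul_add, map_sub] at h h' ⊢
    rw [add_sub_add_comm, h, h']
    abel
  | tmul a a' =>
    induction Y using TensorProduct.induction_on with
    | zero => simp
    | add X X' h h' =>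
      simp only [map_add, mul_add, smul_add, map_sub] at h h' ⊢
      rw [add_sub_add_comm, h, h']
      abel
    | tmul b b' =>
      have h1 : A.sgn b = b - (2 : k) • A.po b := by
        simp only [sgn, LinearMap.sub_apply, two_smul, po_eq]
        abel
      simp only [Algebra.TensorProduct.tmul_mul_tmul, TensorProduct.map_tmul, LinearMap.id_apply,
        map_sub, map_smul, contr_tmul, d.varpi_mul hs, counit_po, d.varpi_po, zero_smul, zero_add,
        TensorProduct.rid_tmul, h1, map_add, smul_eq_mul]
      simp only [add_smul, mul_sub, smul_mul_assoc, mul_smul_comm, smul_sub, smul_smul, mul_comm,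
        mul_assoc]
      abel

/-- The twisted Leibniz rule: `D v` acts from the right, so its sign falls on the second factor. -/
lemma D_mul (hs : A.IsSuperCommutative) (v : P.W →ₗ[k] k) (a b : A.carrier) :
    d.D v (a * b) = a * d.D v b + d.D v a * A.sgn b := by
  simp only [D, LinearMap.comp_apply]
  rw [A.comul_mul, d.contr_mul hs, A.comul_counit, A.comul_counit]

lemma D_po (v : P.W →ₗ[k] k) (a : A.carrier) : d.D v (A.po a) = A.pe (d.D v (A.po a)) := by
  simp only [D, LinearMap.comp_apply]
  rw [A.comul_odd _ (A.pe_po a)]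
  induction A.comul (A.po a) using TensorProduct.induction_on with
  | zero => simp
  | tmul x y => simp [d.varpi_pe, d.varpi_po, pe_pe]
  | add x y hx hy =>
    simp only [map_add] at hx hy ⊢
    rw [add_add_add_comm, hx, hy]
    abel

lemma D_pe (v : P.W →ₗ[k] k) (a : A.carrier) : d.D v (A.pe a) = A.po (d.D v (A.pe a)) := by
  simp only [D, LinearMap.comp_apply]
  rw [A.comul_even _ (A.po_pe a)]
  induction A.comul (A.pe a) using TensorProduct.induction_on with
  | zero => simp
  | tmul x y => simp [d.varpi_pe, d.varpi_po, po_po]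
  | add x y hx hy =>
    simp only [map_add] at hx hy ⊢
    rw [add_add_add_comm, hx, hy]
    abel

lemma pe_D (v : P.W →ₗ[k] k) (a : A.carrier) : A.pe (d.D v a) = d.D v (A.po a) := by
  conv_lhs => rw [← A.pe_add_po a, map_add, d.D_pe, map_add, A.pe_po, ← d.D_po, zero_add]

lemma po_D (v : P.W →ₗ[k] k) (a : A.carrier) : A.po (d.D v a) = d.D v (A.pe a) := by
  conv_lhs => rw [← A.pe_add_po a, map_add, map_add, d.D_po, A.po_pe, ← d.D_pe, add_zero]

lemma sgn_D (v : P.W →ₗ[k] k) (a : A.carrier) : A.sgn (d.D v a) = - d.D v (A.sgn a) := by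
  simp [sgn, pe_D, po_D]

lemma D_even_odd (v : P.W →ₗ[k] k) {a : A.carrier} (h : A.po a = 0) : A.pe (d.D v a) = 0 := by
  rw [pe_D, h, map_zero]

lemma D_odd_even (v : P.W →ₗ[k] k) {a : A.carrier} (h : A.pe a = 0) : A.po (d.D v a) = 0 := by
  rw [po_D, h, map_zero]

lemma D_mul_odd (hs : A.IsSuperCommutative) (v : P.W →ₗ[k] k) (a : A.carrier) {b : A.carrier}
    (hb : A.pe b = 0) : d.D v (a * b) = a * d.D v b - d.D v a * b := by
  rw [d.D_mul hs, sgn_of_odd hb, mul_neg, sub_eq_add_neg]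

lemma D_mem_fil (hs : A.IsSuperCommutative) (v : P.W →ₗ[k] k) {n : ℕ} {a : A.carrier}
    (ha : a ∈ A.fil (n + 1)) : d.D v a ∈ A.fil n := by
  induction n generalizing a with
  | zero => exact mem_fil_zero _
  | succ n ih =>
    rw [fil_succ] at ha
    induction ha using Submodule.mul_induction_on' with
    | mem_mul_mem a ha b hb =>
      rw [d.D_mul_odd hs v a hb]
      exact sub_mem (hs.mul_mem_fil_right _ ha) (mul_mem_fil_succ (ih ha) hb)
    | add x _ y _ hx hy => rw [map_add]; exact add_mem hx hy

/-- The anticommutator `D_u D_v + D_v D_u` is an even derivation, hence preserves the filtration. -/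
lemma D_anticomm_mem_fil (hs : A.IsSuperCommutative) (u v : P.W →ₗ[k] k) {n : ℕ} {a : A.carrier}
    (ha : a ∈ A.fil n) : d.D u (d.D v a) + d.D v (d.D u a) ∈ A.fil n := by
  induction n generalizing a with
  | zero => exact mem_fil_zero _
  | succ n ih =>
    rw [fil_succ] at ha
    induction ha using Submodule.mul_induction_on' with
    | mem_mul_mem a ha b hb =>
      have h : d.D u (d.D v (a * b)) + d.D v (d.D u (a * b)) =
          a * (d.D u (d.D v b) + d.D v (d.D u b)) +
            (d.D u (d.D v a) + d.D v (d.D u a)) * b := by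
        rw [d.D_mul_odd hs v a hb, d.D_mul_odd hs u a hb, map_sub, map_sub,
          d.D_mul_odd hs _ _ hb, d.D_mul_odd hs _ _ hb, d.D_mul hs, d.D_mul hs, sgn_D, sgn_D,
          sgn_of_odd hb]
        simp only [map_neg, neg_neg]
        noncomm_ring
      rw [h]
      refine add_mem (mul_mem_fil_succ ha ?_) (mul_mem_fil_succ (ih ha) hb)
      rw [map_add, d.D_even_odd u (d.D_odd_even v hb), d.D_even_odd v (d.D_odd_even u hb),
        add_zero]
    | add x _ y _ hx hy =>
      simp only [map_add] at hx hy ⊢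
      rw [add_add_add_comm]
      exact add_mem hx hy

/-- Naturality of the derivations `D`. -/
lemma D_map {B : HopfSuperalgebra k} {Q : HCP k} (e : BarPairData B Q)
    (α : HopfSuperalgebra.Hom A B) (g : P.W →ₗ[k] Q.W)
    (h : e.ϖ ∘ₗ α.toLinearMap = g ∘ₗ d.ϖ) (v : Q.W →ₗ[k] k) (a : A.carrier) :
    e.D v (α.toLinearMap a) = α.toLinearMap (d.D (v ∘ₗ g) a) := by
  simp only [D, LinearMap.comp_apply]
  rw [α.map_comul']
  induction A.comul a using TensorProduct.induction_on with
  | zero => simp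
  | tmul x y =>
    have := LinearMap.congr_fun h y
    simp only [LinearMap.comp_apply] at this
    simp [this]
  | add x y hx hy => simp only [map_add, hx, hy]

end BarPairData

/-! ### Coinvariant odd elements -/

namespace BarPairData
open HopfSuperalgebra

variable {k : Type} [Field k] {A : HopfSuperalgebra k} {P : HCP k} (d : BarPairData A P)

/-- An even linear section of `π`. -/
def sec : P.C →ₗ[k] A.carrier :=
  A.pe ∘ₗ (d.π.exists_rightInverse_of_surjective (LinearMap.range_eq_top.2 d.π_surj)).choose

lemma pi_sec (c : P.C) : d.π (d.sec c) = c := by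
  have := (d.π.exists_rightInverse_of_surjective (LinearMap.range_eq_top.2 d.π_surj)).choose_spec
  rw [sec, LinearMap.comp_apply, d.pi_pe]
  exact LinearMap.congr_fun this c

lemma po_sec (c : P.C) : A.po (d.sec c) = 0 := A.po_pe _

/-- A lift to `A` of the map `S ∘ π`, where `S` is the antipode of `C = Ā`. -/
def anti : A.carrier →ₗ[k] A.carrier := d.sec ∘ₗ HopfAlgebra.antipode k ∘ₗ d.π

lemma pi_anti (a : A.carrier) : d.π (d.anti a) = HopfAlgebra.antipode k (d.π a) := d.pi_sec _

lemma po_anti (a : A.carrier) : A.po (d.anti a) = 0 := d.po_sec _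

lemma anti_odd {a : A.carrier} (h : A.pe a = 0) : d.anti a = 0 := by
  simp [anti, d.pi_odd h]

/-- The map `x ↦ Σ S(x₍₁₎) (x₍₂₎)₁`, where `S` is a lift of the antipode of `Ā`: it turns an odd
element into a left-coinvariant one (modulo the odd ideal) with the same image in `W`. -/
def coinv : A.carrier →ₗ[k] A.carrier :=
  LinearMap.mul' k A.carrier ∘ₗ TensorProduct.map d.anti A.po ∘ₗ A.comul

lemma pe_coinv (x : A.carrier) : A.pe (d.coinv x) = 0 := by
  simp only [coinv, LinearMap.comp_apply]
  induction A.comul x using TensorProduct.induction_on with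
  | zero => simp
  | tmul a b => simp [pe_mul, d.po_anti, A.pe_po]
  | add X Y hX hY => simp only [map_add, hX, hY, add_zero]

lemma antipode_pi_mul_pi (x : A.carrier) :
    LinearMap.mul' k P.C (TensorProduct.map (HopfAlgebra.antipode k ∘ₗ d.π) d.π (A.comul x)) =
      algebraMap k P.C (A.counit x) := by
  have h := HopfAlgebra.mul_antipode_rTensor_comul_apply (R := k) (d.π x)
  rw [d.π_comul, d.π_counit, LinearMap.rTensor, ← LinearMap.comp_apply (TensorProduct.map _ _),
    ← TensorProduct.map_comp, LinearMap.id_comp] at h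
  exact h

lemma pi_mul_antipode_pi (x : A.carrier) :
    LinearMap.mul' k P.C (TensorProduct.map d.π (HopfAlgebra.antipode k ∘ₗ d.π) (A.comul x)) =
      algebraMap k P.C (A.counit x) := by
  have h := HopfAlgebra.mul_antipode_lTensor_comul_apply (R := k) (d.π x)
  rw [d.π_comul, d.π_counit, LinearMap.lTensor, ← LinearMap.comp_apply (TensorProduct.map _ _),
    ← TensorProduct.map_comp, LinearMap.id_comp] at h
  exact h

/-- `Σ S(x₍₁₎) x₍₂₎ v(ϖ x₍₃₎) = v(ϖ x)` in `Ā`, the sign-twisted term being odd. -/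
lemma pi_D_coinv (hs : A.IsSuperCommutative) (v : P.W →ₗ[k] k) (x : A.carrier) :
    d.π (d.D v (d.coinv x)) = algebraMap k P.C (v (d.ϖ x)) := by
  have h1 : ∀ X : A.carrier ⊗[k] A.carrier,
      d.π (d.D v (LinearMap.mul' k A.carrier (TensorProduct.map d.anti A.po X))) =
      LinearMap.mul' k P.C (TensorProduct.map (HopfAlgebra.antipode k ∘ₗ d.π) d.π
        (TensorProduct.map LinearMap.id (d.contr v)
          (TensorProduct.map LinearMap.id A.comul X))) := by
    intro X
    induction X using TensorProduct.induction_on with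
    | zero => simp
    | tmul a b =>
      have h : d.π (d.D v (A.po b)) = d.π (d.D v b) := by rw [← pe_D, d.pi_pe]
      simp only [TensorProduct.map_tmul, LinearMap.mul'_apply, LinearMap.id_apply]
      rw [d.D_mul hs, map_add, d.π_mul, d.π_mul, h,
        d.pi_odd (a := A.sgn _) (by rw [sgn_of_odd (A.pe_po b), map_neg, A.pe_po, neg_zero]),
        mul_zero, add_zero, d.pi_anti]
      rfl
    | add X Y hX hY => simp only [map_add, hX, hY]
  have h2 : ∀ X : A.carrier ⊗[k] A.carrier,
      LinearMap.mul' k P.C (TensorProduct.map (HopfAlgebra.antipode k ∘ₗ d.π) d.π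
        (TensorProduct.map LinearMap.id (d.contr v)
          (TensorProduct.assoc k _ _ _ (TensorProduct.map A.comul LinearMap.id X)))) =
      algebraMap k P.C (v (d.ϖ (TensorProduct.lid k _
        (TensorProduct.map A.counit LinearMap.id X)))) := by
    intro X
    induction X using TensorProduct.induction_on with
    | zero => simp
    | tmul a b =>
      have h3 : ∀ Y : A.carrier ⊗[k] A.carrier,
          LinearMap.mul' k P.C (TensorProduct.map (HopfAlgebra.antipode k ∘ₗ d.π) d.π
            (TensorProduct.map LinearMap.id (d.contr v)
              (TensorProduct.assoc k _ _ _ (Y ⊗ₜ[k] b)))) =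
          v (d.ϖ b) • LinearMap.mul' k P.C
            (TensorProduct.map (HopfAlgebra.antipode k ∘ₗ d.π) d.π Y) := by
        intro Y
        induction Y using TensorProduct.induction_on with
        | zero => simp
        | tmul x y => simp
        | add X Y hX hY => simp only [TensorProduct.add_tmul, map_add, hX, hY, smul_add]
      simp only [TensorProduct.map_tmul, LinearMap.id_apply]
      rw [h3, d.antipode_pi_mul_pi]
      rw [TensorProduct.lid_tmul, map_smul, map_smul, smul_eq_mul, map_mul, Algebra.smul_def,
        mul_comm]
    | add X Y hX hY => simp only [map_add, hX, hY]
  rw [coinv, LinearMap.comp_apply, LinearMap.comp_apply, h1, ← A.coassoc, h2, A.counit_comul]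

lemma D_coinv (hs : A.IsSuperCommutative) (v : P.W →ₗ[k] k) (x : A.carrier) :
    d.D v (d.coinv x) - algebraMap k A.carrier (v (d.ϖ x)) ∈ A.fil 1 := by
  rw [← d.pi_eq_iff, d.pi_D_coinv hs, Algebra.algebraMap_eq_smul_one,
    Algebra.algebraMap_eq_smul_one, map_smul, d.π_one]

lemma coinv_even {x : A.carrier} (h : A.po x = 0) : d.coinv x = 0 := by
  simp only [coinv, LinearMap.comp_apply]
  rw [A.comul_even x h]
  induction A.comul x using TensorProduct.induction_on with
  | zero => simp
  | tmul a b => simp [d.anti_odd, A.pe_po, A.po_pe]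
  | add X Y hX hY =>
    simp only [map_add] at hX hY ⊢
    rw [add_add_add_comm, hX, hY, add_zero]

/-- Modulo `F²`, `coinv` is a derivation relative to `x ↦ Σ S(x₍₁₎) (x₍₂₎)₀`; the latter lifts
`ε`. -/
lemma coinv_mul (hs : A.IsSuperCommutative) (b c : A.carrier) :
    d.coinv (b * c) -
      (LinearMap.mul' k A.carrier (TensorProduct.map d.anti A.pe (A.comul b)) * d.coinv c +
       d.coinv b * LinearMap.mul' k A.carrier (TensorProduct.map d.anti A.pe (A.comul c))) ∈
      A.fil 2 := by
  let N : A.carrier ⊗[k] A.carrier →ₗ[k] A.carrier :=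
    LinearMap.mul' k A.carrier ∘ₗ TensorProduct.map d.anti A.po
  let M : A.carrier ⊗[k] A.carrier →ₗ[k] A.carrier :=
    LinearMap.mul' k A.carrier ∘ₗ TensorProduct.map d.anti A.pe
  have h1 : ∀ X Y : A.carrier ⊗[k] A.carrier,
      N (TensorProduct.map LinearMap.id A.po X * TensorProduct.map A.po LinearMap.id Y) = 0 := by
    intro X Y
    induction X using TensorProduct.induction_on with
    | zero => simp
    | add X X' h h' => simp only [map_add, add_mul, h, h', add_zero]
    | tmul a a' =>
      induction Y using TensorProduct.induction_on with
      | zero => simp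
      | add X X' h h' => simp only [map_add, mul_add, h, h', add_zero]
      | tmul e e' =>
        have : d.anti (a * A.po e) = 0 := by
          rw [anti, LinearMap.comp_apply, LinearMap.comp_apply, d.π_mul, d.pi_po, mul_zero,
            map_zero, map_zero]
        simp [N, this]
  have h2 : ∀ X Y : A.carrier ⊗[k] A.carrier, N (X * Y) - (M X * N Y + N X * M Y) ∈ A.fil 2 := by
    intro X Y
    induction X using TensorProduct.induction_on with
    | zero => simp
    | add X X' h h' =>
      convert add_mem h h' using 1
      simp only [map_add, add_mul]
      abel
    | tmul a a' =>
      induction Y using TensorProduct.induction_on with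
      | zero => simp
      | add X X' h h' =>
        convert add_mem h h' using 1
        simp only [map_add, mul_add]
        abel
      | tmul e e' =>
        have h3 : d.anti (a * e) - d.anti a * d.anti e ∈ A.fil 1 := by
          rw [← d.pi_eq_iff, d.pi_anti, d.π_mul, d.π_mul, d.pi_anti, d.pi_anti,
            HopfAlgebra.antipode_mul_antidistrib, mul_comm]
        have h4 : A.pe (A.po (a' * e')) = 0 := A.pe_po _
        have h5 := mul_mem_fil_succ h3 h4
        convert h5 using 1
        simp only [N, M, LinearMap.comp_apply, Algebra.TensorProduct.tmul_mul_tmul,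
          TensorProduct.map_tmul, LinearMap.mul'_apply, sub_mul]
        congr 1
        have e1 : d.anti a * A.pe a' * (d.anti e * A.po e') =
            d.anti a * d.anti e * (A.pe a' * A.po e') := by
          rw [mul_assoc, ← mul_assoc (A.pe a'), ← hs.1 (d.anti e) _ (d.po_anti e)]
          simp only [mul_assoc]
        have e2 : d.anti a * A.po a' * (d.anti e * A.pe e') =
            d.anti a * d.anti e * (A.po a' * A.pe e') := by
          rw [mul_assoc, ← mul_assoc (A.po a'), ← hs.1 (d.anti e) _ (d.po_anti e)]
          simp only [mul_assoc]
        rw [e1, e2, ← mul_add, po_mul]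
  have h3 := h2 (A.comul b) (A.comul c)
  have h4 : d.coinv (b * c) = N (A.comul b * A.comul c) := by
    change N (A.comul (b * c)) = _
    rw [A.comul_mul, map_sub, map_smul, h1, smul_zero, sub_zero]
  rw [h4]
  exact h3

/-- Modulo `F²`, the element `coinv x` depends only on `ϖ x`. -/
lemma coinv_mem_fil_two (hs : A.IsSuperCommutative) {x : A.carrier} (h : d.ϖ x = 0) :
    d.coinv x ∈ A.fil 2 := by
  have hx : x ∈ LinearMap.ker d.ϖ := h
  rw [d.ϖ_ker] at hx
  have hle : LinearMap.ker A.po ⊔ Submodule.span k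
      {x | ∃ b c, A.po b = 0 ∧ A.counit b = 0 ∧ A.pe c = 0 ∧ x = b * c} ≤
      (A.fil 2).comap d.coinv := by
    refine sup_le (fun x hx => ?_) (Submodule.span_le.2 ?_)
    · change d.coinv x ∈ A.fil 2
      rw [d.coinv_even hx]
      exact zero_mem _
    · rintro _ ⟨b, c, hb, hb', hc, rfl⟩
      change d.coinv (b * c) ∈ A.fil 2
      have h1 := d.coinv_mul hs b c
      rw [d.coinv_even hb, zero_mul, add_zero] at h1
      have h2 : LinearMap.mul' k A.carrier (TensorProduct.map d.anti A.pe (A.comul b)) ∈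
          A.fil 1 := by
        rw [← d.pi_eq_zero_iff]
        have h3 : ∀ X : A.carrier ⊗[k] A.carrier,
            d.π (LinearMap.mul' k A.carrier (TensorProduct.map d.anti A.pe X)) =
            LinearMap.mul' k P.C (TensorProduct.map (HopfAlgebra.antipode k ∘ₗ d.π) d.π X) := by
          intro X
          induction X using TensorProduct.induction_on with
          | zero => simp
          | tmul a b => simp [d.π_mul, d.pi_anti, d.pi_pe]
          | add X Y hX hY => simp only [map_add, hX, hY]
        rw [h3, d.antipode_pi_mul_pi, hb', map_zero]
      have h4 := mul_mem_fil_succ h2 (d.pe_coinv c)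
      have h5 := add_mem h1 h4
      rwa [sub_add_cancel] at h5
  exact hle hx

/-- Every odd element is recovered, modulo the square of the odd ideal, from the coinvariant
elements: `b ≡ Σ b₍₁₎ · coinv b₍₂₎`. -/
lemma po_sub_mem (b : A.carrier) :
    A.po b - LinearMap.mul' k A.carrier (TensorProduct.map (d.sec ∘ₗ d.π) d.coinv (A.comul b)) ∈
      A.fil 2 := by
  -- `h a = Σ a₍₁₎ S(a₍₂₎)`, computed with lifts, so that `h a ≡ ε(a)` modulo `F¹`
  let h : A.carrier →ₗ[k] A.carrier :=
    LinearMap.mul' k A.carrier ∘ₗ TensorProduct.map (d.sec ∘ₗ d.π) d.anti ∘ₗ A.comul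
  have h0 : ∀ a, algebraMap k A.carrier (A.counit a) - h a ∈ A.fil 1 := by
    intro a
    rw [← d.pi_eq_iff]
    have h3 : ∀ X : A.carrier ⊗[k] A.carrier,
        d.π (LinearMap.mul' k A.carrier (TensorProduct.map (d.sec ∘ₗ d.π) d.anti X)) =
        LinearMap.mul' k P.C (TensorProduct.map d.π (HopfAlgebra.antipode k ∘ₗ d.π) X) := by
      intro X
      induction X using TensorProduct.induction_on with
      | zero => simp
      | tmul a b => simp [d.π_mul, d.pi_anti, d.pi_sec]
      | add X Y hX hY => simp only [map_add, hX, hY]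
    simp only [h, LinearMap.comp_apply]
    rw [h3, d.pi_mul_antipode_pi, Algebra.algebraMap_eq_smul_one,
      Algebra.algebraMap_eq_smul_one, map_smul, d.π_one]
  have h1 : ∀ X : A.carrier ⊗[k] A.carrier,
      A.po (TensorProduct.lid k _ (TensorProduct.map A.counit LinearMap.id X)) -
        LinearMap.mul' k A.carrier (TensorProduct.map h A.po X) ∈ A.fil 2 := by
    intro X
    induction X using TensorProduct.induction_on with
    | zero => simp
    | tmul a b =>
      have := mul_mem_fil_succ (h0 a) (A.pe_po b)
      convert this using 1
      simp [sub_mul, Algebra.algebraMap_eq_smul_one]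
    | add X Y hX hY =>
      convert add_mem hX hY using 1
      simp only [map_add]
      abel
  have h2 : ∀ X : A.carrier ⊗[k] A.carrier,
      LinearMap.mul' k A.carrier (TensorProduct.map h A.po X) =
      LinearMap.mul' k A.carrier (TensorProduct.map (d.sec ∘ₗ d.π)
        (LinearMap.mul' k A.carrier ∘ₗ TensorProduct.map d.anti A.po)
        (TensorProduct.assoc k _ _ _ (TensorProduct.map A.comul LinearMap.id X))) := by
    intro X
    induction X using TensorProduct.induction_on with
    | zero => simp
    | tmul a b =>
      simp only [TensorProduct.map_tmul, LinearMap.id_apply, h, LinearMap.comp_apply]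
      induction A.comul a using TensorProduct.induction_on with
      | zero => simp
      | tmul x y => simp [mul_assoc]
      | add X Y hX hY =>
        simp only [map_add, TensorProduct.add_tmul, ← hX, ← hY]
    | add X Y hX hY => simp only [map_add, hX, hY]
  have h3 := h1 (A.comul b)
  rw [A.counit_comul, h2, A.coassoc, ← LinearMap.comp_apply (TensorProduct.map _ _),
    ← TensorProduct.map_comp, LinearMap.comp_id, LinearMap.comp_assoc] at h3
  exact h3

/-- The odd ideal is generated, modulo its square, by the coinvariant elements `coinv t` for `t`
in any subspace surjecting onto `W`. -/
lemma fil_one_le (hs : A.IsSuperCommutative) (T : Submodule k A.carrier)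
    (hT : T.map d.ϖ = ⊤) : A.fil 1 ≤ ⊤ * T.map d.coinv ⊔ A.fil 2 := by
  have hl : ∀ a x, x ∈ ⊤ * T.map d.coinv ⊔ A.fil 2 → a * x ∈ ⊤ * T.map d.coinv ⊔ A.fil 2 := by
    intro a x hx
    obtain ⟨y, hy, z, hz, rfl⟩ := Submodule.mem_sup.1 hx
    rw [mul_add]
    refine Submodule.add_mem_sup ?_ (mul_mem_fil_left a hz)
    have h : (⊤ : Submodule k A.carrier) * (⊤ * T.map d.coinv) = ⊤ * T.map d.coinv := by
      rw [← mul_assoc, top_mul_top']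
    exact h ▸ Submodule.mul_mem_mul trivial hy
  have ho : ∀ b, A.pe b = 0 → b ∈ ⊤ * T.map d.coinv ⊔ A.fil 2 := by
    intro b hb
    have h1 := d.po_sub_mem b
    rw [po_of_odd hb] at h1
    have h2 : ∀ X : A.carrier ⊗[k] A.carrier,
        LinearMap.mul' k A.carrier (TensorProduct.map (d.sec ∘ₗ d.π) d.coinv X) ∈
          ⊤ * T.map d.coinv ⊔ A.fil 2 := by
      intro X
      induction X using TensorProduct.induction_on with
      | zero => simp
      | tmul a b =>
        obtain ⟨t, ht, hte⟩ : d.ϖ b ∈ T.map d.ϖ := hT ▸ trivial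
        have h3 : d.coinv (b - t) ∈ A.fil 2 :=
          d.coinv_mem_fil_two hs (by rw [map_sub, hte, sub_self])
        simp only [TensorProduct.map_tmul, LinearMap.mul'_apply]
        apply hl
        have h4 : d.coinv b = 1 * d.coinv t + d.coinv (b - t) := by
          rw [one_mul, map_sub]; abel
        rw [h4]
        exact Submodule.add_mem_sup
          (Submodule.mul_mem_mul trivial (Submodule.mem_map_of_mem ht)) h3
      | add X Y hX hY => simp only [map_add]; exact add_mem hX hY
    have h5 := add_mem (Submodule.mem_sup_right (S := ⊤ * T.map d.coinv) h1) (h2 (A.comul b))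
    rwa [sub_add_cancel] at h5
  rw [show A.fil 1 = ⊤ * A.oddPart by rw [fil, pow_one]]
  exact Submodule.mul_le.2 fun a _ b hb => hl _ _ (ho b hb)

end BarPairData

/-! ### Detecting the filtration by contractions -/

namespace BarPairData
open HopfSuperalgebra

variable {k : Type} [Field k] {A : HopfSuperalgebra k} {P : HCP k} (d : BarPairData A P)

/-- Composite over a list of indices of the operators `a ↦ a - D_{vᵢ}(a) yᵢ`. On the associated
graded algebra `Ā ⊗ Λ(W)` each factor is the projection removing all monomials that contain
`yᵢ`. -/
def proj {ι : Type} (y : ι → A.carrier) (v : ι → P.W →ₗ[k] k) :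
    List ι → A.carrier →ₗ[k] A.carrier
  | [] => LinearMap.id
  | i :: L => proj y v L ∘ₗ (LinearMap.id - LinearMap.mulRight k (y i) ∘ₗ d.D (v i))

/-- Detection of the filtration by the derivations `D`, relative to an ideal `K`. The `yᵢ = coinv xᵢ`
generate the odd ideal modulo `F²` and `K`, and `D_{vᵢ} yⱼ ≡ δᵢⱼ` modulo `F¹`. The operator
`proj y v L`, with `L` running over all indices, kills every multiple of any `yⱼ`, hence all of
`F^(n+1)`, modulo `F^(n+2)`; but it fixes `a` there, as the `D_{vᵢ} a` are small. -/
lemma mem_fil_sup_of_D_mem (hs : A.IsSuperCommutative) (h2 : (2 : k) ≠ 0)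
    (K : Submodule k A.carrier)
    (hKl : ∀ a, ∀ x ∈ K, a * x ∈ K) (hKr : ∀ a, ∀ x ∈ K, x * a ∈ K)
    {ι : Type} [Finite ι] (x : ι → A.carrier) (v : ι → P.W →ₗ[k] k)
    (hv : ∀ i, v i (d.ϖ (x i)) = 1) (hv' : ∀ i j, i ≠ j → v i (d.ϖ (x j)) = 0)
    (T : Submodule k A.carrier) (hTK : T.map d.coinv ≤ K)
    (hT : (Submodule.span k (Set.range x) ⊔ T).map d.ϖ = ⊤)
    (hDK : ∀ i, ∀ a ∈ K, d.D (v i) a ∈ K)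
    (n : ℕ) (a : A.carrier) (ha : a ∈ A.fil (n + 1) ⊔ K)
    (hDa : ∀ i, d.D (v i) a ∈ A.fil (n + 1) ⊔ K) : a ∈ A.fil (n + 2) ⊔ K := by
  let y : ι → A.carrier := fun i => d.coinv (x i)
  have hy : ∀ i, A.pe (y i) = 0 := fun i => d.pe_coinv _
  have hD : ∀ i, d.D (v i) (y i) - 1 ∈ A.fil 1 := fun i => by
    simpa [hv] using d.D_coinv hs (v i) (x i)
  have hD' : ∀ i j, i ≠ j → d.D (v i) (y j) ∈ A.fil 1 := fun i j h => by
    simpa [hv' i j h] using d.D_coinv hs (v i) (x j)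
  have hGl : ∀ m a b, b ∈ A.fil m ⊔ K → a * b ∈ A.fil m ⊔ K := by
    intro m a b hb
    obtain ⟨p, hp, q, hq, rfl⟩ := Submodule.mem_sup.1 hb
    rw [mul_add]
    exact Submodule.add_mem_sup (mul_mem_fil_left a hp) (hKl a q hq)
  have hGr : ∀ m n a b, a ∈ A.fil m ⊔ K → b ∈ A.fil n → a * b ∈ A.fil (m + n) ⊔ K := by
    intro m n a b ha hb
    obtain ⟨p, hp, q, hq, rfl⟩ := Submodule.mem_sup.1 ha
    rw [add_mul]
    exact Submodule.add_mem_sup (hs.mul_mem_fil hp hb) (hKr b q hq)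
  have hGy : ∀ m a i, a ∈ A.fil m ⊔ K → a * y i ∈ A.fil (m + 1) ⊔ K := fun m a i ha =>
    hGr m 1 a _ ha (mem_fil_one (hy i))
  have hGD : ∀ m i a, a ∈ A.fil (m + 1) ⊔ K → d.D (v i) a ∈ A.fil m ⊔ K := by
    intro m i a ha
    obtain ⟨p, hp, q, hq, rfl⟩ := Submodule.mem_sup.1 ha
    rw [map_add]
    exact Submodule.add_mem_sup (d.D_mem_fil hs _ hp) (hDK i q hq)
  have hGT : ∀ m i a, a ∈ A.fil m ⊔ K → a - d.D (v i) a * y i ∈ A.fil m ⊔ K := by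
    intro m i a ha
    cases m with
    | zero => rw [fil_zero, top_sup_eq]; trivial
    | succ m => exact sub_mem ha (hGy m _ i (hGD m i a ha))
  have hproj : ∀ (i : ι) (L : List ι) (a : A.carrier),
      d.proj y v (i :: L) a = d.proj y v L (a - d.D (v i) a * y i) := fun i L a => rfl
  -- `c1`: the operators preserve the filtration; `c2`: they kill multiples of `y j` for `j ∈ L`;
  -- `c3`: over all indices they kill `F^(n+1)`; `c4`: they fix `a`.
  have c1 : ∀ (L : List ι) (m : ℕ) (a : A.carrier), a ∈ A.fil m ⊔ K →
      d.proj y v L a ∈ A.fil m ⊔ K := by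
    intro L
    induction L with
    | nil => intro m a ha; exact ha
    | cons i L ih => intro m a ha; rw [hproj]; exact ih m _ (hGT m i a ha)
  have c2 : ∀ (L : List ι) (m : ℕ) (h : A.carrier) (j : ι), h ∈ A.fil m ⊔ K → j ∈ L →
      d.proj y v L (h * y j) ∈ A.fil (m + 2) ⊔ K := by
    intro L
    induction L with
    | nil => intro m h j _ hj; simp at hj
    | cons i L ih =>
      intro m h j hh hj
      rw [hproj, d.D_mul_odd hs _ _ (hy j)]
      by_cases hij : i = j
      · subst hij
        apply c1
        have h3 : h * y i - (h * d.D (v i) (y i) - d.D (v i) h * y i) * y i =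
            -(h * (d.D (v i) (y i) - 1) * y i) := by
          rw [sub_mul, mul_assoc (d.D (v i) h), hs.odd_sq h2 (hy i)]
          noncomm_ring
        rw [h3]
        exact neg_mem (hGy _ _ i (hGr m 1 _ _ hh (hD i)))
      · have hjL : j ∈ L := (List.mem_cons.1 hj).resolve_left (Ne.symm hij)
        have h3 : h * y j - (h * d.D (v i) (y j) - d.D (v i) h * y j) * y i =
            (h - d.D (v i) h * y i) * y j - h * d.D (v i) (y j) * y i := by
          rw [sub_mul, sub_mul, mul_assoc (d.D (v i) h), hs.2 _ _ (hy j) (hy i)]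
          noncomm_ring
        rw [h3, map_sub]
        exact sub_mem (ih m _ j (hGT m i h hh) hjL)
          (c1 _ _ _ (hGy _ _ i (hGr m 1 _ _ hh (hD' i j hij))))
  have : Fintype ι := Fintype.ofFinite ι
  have hgen : A.fil 1 ≤ ⊤ * Submodule.span k (Set.range y) ⊔ (A.fil 2 ⊔ K) := by
    refine (d.fil_one_le hs _ hT).trans ?_
    rw [Submodule.map_sup, Submodule.mul_sup, Submodule.map_span, ← Set.range_comp]
    refine sup_le (sup_le le_sup_left ?_) (le_sup_left.trans le_sup_right)
    refine le_trans ?_ (le_sup_right.trans le_sup_right)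
    exact Submodule.mul_le.2 fun a _ b hb => hKl a b (hTK hb)
  have c3 : ∀ b, b ∈ A.fil (n + 1) ⊔ K →
      d.proj y v Finset.univ.toList b ∈ A.fil (n + 2) ⊔ K := by
    suffices h : A.fil (n + 1) ⊔ K ≤
        (A.fil (n + 2) ⊔ K).comap (d.proj y v Finset.univ.toList) from fun b hb => h hb
    refine sup_le ?_ fun b hb => c1 _ _ _ (Submodule.mem_sup_right hb)
    rw [fil_succ]
    refine Submodule.mul_le.2 fun f hf o ho => ?_
    obtain ⟨p, hp, q, hq, rfl⟩ := Submodule.mem_sup.1 (hgen (mem_fil_one ho))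
    rw [mul_add]
    refine add_mem ?_ (c1 _ _ _ ?_)
    · clear ho hq
      induction hp using Submodule.mul_induction_on' with
      | mem_mul_mem a _ b hb =>
        induction hb using Submodule.span_induction with
        | mem z hz =>
          obtain ⟨j, rfl⟩ := hz
          rw [← mul_assoc]
          exact c2 _ _ _ _ (Submodule.mem_sup_left (hs.mul_mem_fil_right a hf)) (by simp)
        | zero => simp
        | add b c _ _ hb hc => rw [mul_add, mul_add]; exact add_mem hb hc
        | smul r b _ hb => rw [mul_smul_comm, mul_smul_comm]; exact Submodule.smul_mem _ _ hb
      | add b _ c _ hb hc => rw [mul_add]; exact add_mem hb hc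
    · obtain ⟨p', hp', q', hq', rfl⟩ := Submodule.mem_sup.1 hq
      rw [mul_add]
      exact Submodule.add_mem_sup (hs.mul_mem_fil hf hp') (hKl _ _ hq')
  have c4 : ∀ (L : List ι) (b : A.carrier), a - b ∈ A.fil (n + 2) ⊔ K →
      a - d.proj y v L b ∈ A.fil (n + 2) ⊔ K := by
    intro L
    induction L with
    | nil => intro b hb; exact hb
    | cons i L ih =>
      intro b hb
      rw [hproj]
      apply ih
      have h3 : d.D (v i) b ∈ A.fil (n + 1) ⊔ K := by
        have := sub_mem (hDa i) (hGD _ i _ hb)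
        rwa [map_sub, sub_sub_cancel] at this
      rw [← sub_add]
      exact add_mem hb (hGy _ _ i h3)
  have := add_mem (c4 Finset.univ.toList a (by simp)) (c3 a ha)
  rwa [sub_add_cancel] at this

/-- Detection of the filtration by the derivations `D`: the associated graded algebra is
`Ā ⊗ Λ(W)`, where a form of positive degree with vanishing contractions is zero. -/
lemma mem_fil_of_D_mem (hs : A.IsSuperCommutative) (h2 : (2 : k) ≠ 0) (n : ℕ) (a : A.carrier)
    (ha : a ∈ A.fil (n + 1)) (hDa : ∀ v, d.D v a ∈ A.fil (n + 1)) : a ∈ A.fil (n + 2) := by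
  have := P.fdW
  let b := Module.finBasis k P.W
  choose x hx using fun i => d.ϖ_surj (b i)
  have := d.mem_fil_sup_of_D_mem hs h2 ⊥ (by simp) (by simp) x b.coord
    (fun i => by simp [hx]) (fun i j h => by simp [hx, h]) ⊥ (by simp)
    (by
      rw [sup_bot_eq, Submodule.map_span, ← Set.range_comp,
        show d.ϖ ∘ x = b from funext hx, b.span_eq])
    (by simp) n a (by simpa using ha) (fun i => by simpa using hDa _)
  simpa using this

/-- If the contractions of `a` along a subspace `V ⊆ W*` of codimension less than the filtration
degree of `a` lie one step deeper than expected, then so does `a`: a form annihilated by `V` is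
induced from `Λ` of a space of dimension `codim V`. The induction enlarges `V` by one functional `u`;
the form `D_u a` is still annihilated by `V`, and by `u`, because contractions anticommute in the
associated graded algebra. -/
lemma mem_fil_of_finrank (hs : A.IsSuperCommutative) (h2 : (2 : k) ≠ 0) (s : ℕ) :
    ∀ (V : Submodule k (P.W →ₗ[k] k)) (n : ℕ) (a : A.carrier),
      Module.finrank k (P.W →ₗ[k] k) ≤ Module.finrank k V + s → s ≤ n → a ∈ A.fil (n + 1) →
      (∀ v ∈ V, d.D v a ∈ A.fil (n + 1)) → a ∈ A.fil (n + 2) := by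
  have := P.fdW
  have htop : ∀ (V : Submodule k (P.W →ₗ[k] k)), V = ⊤ → ∀ (n : ℕ) (a : A.carrier),
      a ∈ A.fil (n + 1) → (∀ v ∈ V, d.D v a ∈ A.fil (n + 1)) → a ∈ A.fil (n + 2) := by
    intro V hV n a ha h
    exact d.mem_fil_of_D_mem hs h2 n a ha fun v => h v (hV ▸ trivial)
  induction s with
  | zero =>
    intro V n a hV _ ha h
    exact htop V (Submodule.eq_top_of_finrank_eq (le_antisymm (Submodule.finrank_le V) hV)) n a ha h
  | succ s ih =>
    intro V n a hV hn ha h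
    by_cases hVt : V = ⊤
    · exact htop V hVt n a ha h
    obtain ⟨u, -, hu⟩ := SetLike.exists_of_lt (lt_top_iff_ne_top.2 hVt)
    obtain ⟨n, rfl⟩ : ∃ m, n = m + 1 := ⟨n - 1, by omega⟩
    set V' := V ⊔ Submodule.span k {u} with hV'
    have hlt : V < V' := lt_of_le_of_ne le_sup_left fun e => hu (by
      rw [e]; exact Submodule.mem_sup_right (Submodule.mem_span_singleton_self u))
    have hfr := Submodule.finrank_lt_finrank_of_lt hlt
    have hcod : Module.finrank k (P.W →ₗ[k] k) ≤ Module.finrank k V' + s := by omega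
    have hstep : ∀ (m : ℕ) (b : A.carrier), (∀ v ∈ V, d.D v b ∈ A.fil m) → d.D u b ∈ A.fil m →
        ∀ v ∈ V', d.D v b ∈ A.fil m := by
      intro m b h1 h2 v hv
      obtain ⟨p, hp, q, hq, rfl⟩ := Submodule.mem_sup.1 hv
      obtain ⟨c, rfl⟩ := Submodule.mem_span_singleton.1 hq
      rw [d.D_add, d.D_smul]
      exact add_mem (h1 p hp) (Submodule.smul_mem _ _ h2)
    have hDu : d.D u a ∈ A.fil (n + 2) := by
      apply ih V' n (d.D u a) hcod (by omega) (d.D_mem_fil hs u ha)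
      apply hstep
      · intro v hv
        have h3 := d.D_anticomm_mem_fil hs v u (hs.fil_anti_succ _ ha)
        have h4 := d.D_mem_fil hs u (h v hv)
        have := sub_mem h3 h4
        rwa [add_sub_cancel_right] at this
      · have h3 := d.D_anticomm_mem_fil hs u u (hs.fil_anti_succ _ ha)
        rw [← two_smul k] at h3
        exact (Submodule.smul_mem_iff _ h2).1 h3
    exact ih V' (n + 1) a hcod (by omega) ha (hstep _ _ h hDu)

/-- Multiplication by the top exterior form detects the odd ideal: if `c · F^d ⊆ F^(d+1)` with
`d = dim W`, then `c ∈ F¹`. -/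
lemma mem_fil_one_of_mul_top (d : BarPairData A P) (hs : A.IsSuperCommutative) (c : A.carrier)
    (h : ∀ f ∈ A.fil (Module.finrank k P.W), c * f ∈ A.fil (Module.finrank k P.W + 1)) :
    c ∈ A.fil 1 := by
  have := P.fdW
  let b := Module.finBasis k P.W
  choose x hx using fun i => d.ϖ_surj (b i)
  let y : _ → A.carrier := fun i => d.coinv (x i)
  have hy : ∀ i, A.pe (y i) = 0 := fun i => d.pe_coinv _
  have hD : ∀ i, d.D (b.coord i) (y i) - 1 ∈ A.fil 1 := fun i => by
    simpa [hx] using d.D_coinv hs (b.coord i) (x i)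
  have hD' : ∀ i j, i ≠ j → d.D (b.coord i) (y j) ∈ A.fil 1 := fun i j h => by
    simpa [hx, h] using d.D_coinv hs (b.coord i) (x j)
  -- the monomial in the `y i` indexed by a list
  let m : List (Fin (Module.finrank k P.W)) → A.carrier := fun L => L.foldr (fun i f => f * y i) 1
  have hm : ∀ i L, m (i :: L) = m L * y i := fun i L => rfl
  have hmf : ∀ L, m L ∈ A.fil L.length := by
    intro L
    induction L with
    | nil => exact mem_fil_zero _
    | cons i L ih => rw [hm]; exact mul_mem_fil_succ ih (hy i)
  have hmD : ∀ i L, i ∉ L → d.D (b.coord i) (c * m L) ∈ A.fil L.length := by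
    intro i L
    induction L with
    | nil => intro _; exact mem_fil_zero _
    | cons j L ih =>
      intro hi
      rw [List.mem_cons, not_or] at hi
      rw [hm, ← mul_assoc, d.D_mul_odd hs _ _ (hy j)]
      exact sub_mem (hs.mul_mem_fil (mul_mem_fil_left c (hmf L)) (hD' i j hi.1))
        (mul_mem_fil_succ (ih hi.2) (hy j))
  have key : ∀ L : List (Fin (Module.finrank k P.W)), L.Nodup →
      c * m L ∈ A.fil (L.length + 1) → c ∈ A.fil 1 := by
    intro L
    induction L with
    | nil => intro _ h; simpa [m] using h
    | cons i L ih =>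
      intro hn h
      rw [List.nodup_cons] at hn
      apply ih hn.2
      have h1 := d.D_mem_fil hs (b.coord i) h
      rw [hm, ← mul_assoc, d.D_mul_odd hs _ _ (hy i)] at h1
      have h3 := add_mem h1 (mul_mem_fil_succ (hmD i L hn.1) (hy i))
      rw [sub_add_cancel] at h3
      have h4 := sub_mem h3 (hs.mul_mem_fil (mul_mem_fil_left c (hmf L)) (hD i))
      rwa [mul_sub, mul_one, sub_sub_cancel] at h4
  have hlen : (Finset.univ : Finset (Fin (Module.finrank k P.W))).toList.length =
      Module.finrank k P.W := by simp
  apply key _ (Finset.nodup_toList Finset.univ)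
  rw [hlen]
  apply h
  have := hmf (Finset.univ : Finset (Fin (Module.finrank k P.W))).toList
  rwa [hlen] at this

end BarPairData

/-! ### Morphisms -/

namespace HopfSuperalgebra.Hom
open HopfSuperalgebra BarPairData

variable {k : Type} [Field k] {A B : HopfSuperalgebra k} {P Q : HCP k}
  (α : HopfSuperalgebra.Hom A B)

lemma map_po (a : A.carrier) : α.toLinearMap (A.po a) = B.po (α.toLinearMap a) := by
  rw [po_eq, po_eq, map_sub, α.map_pe']

lemma map_odd {a : A.carrier} (h : A.pe a = 0) : B.pe (α.toLinearMap a) = 0 := by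
  rw [← α.map_pe', h, map_zero]

lemma map_sgn (a : A.carrier) : α.toLinearMap (A.sgn a) = B.sgn (α.toLinearMap a) := by
  simp only [sgn, LinearMap.sub_apply, map_sub, α.map_po, α.map_pe']

lemma map_fil {n : ℕ} {a : A.carrier} (ha : a ∈ A.fil n) : α.toLinearMap a ∈ B.fil n := by
  induction n generalizing a with
  | zero => exact mem_fil_zero _
  | succ n ih =>
    rw [fil_succ] at ha
    induction ha using Submodule.mul_induction_on' with
    | mem_mul_mem a ha b hb =>
      rw [α.map_mul']
      exact mul_mem_fil_succ (ih ha) (α.map_odd hb)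
    | add a _ b _ ha hb => rw [map_add]; exact add_mem ha hb

variable (d : BarPairData A P) (e : BarPairData B Q) (m : HCP.Hom P Q)
  (hC : e.π ∘ₗ α.toLinearMap = m.fC ∘ₗ d.π) (hW : e.ϖ ∘ₗ α.toLinearMap = m.gW ∘ₗ d.ϖ)

include hC in
lemma pi_map (a : A.carrier) : e.π (α.toLinearMap a) = m.fC (d.π a) := LinearMap.congr_fun hC a

include hW in
lemma varpi_map (a : A.carrier) : e.ϖ (α.toLinearMap a) = m.gW (d.ϖ a) := LinearMap.congr_fun hW a

/-- The coinvariant elements `e.coinv (α x)` lie in every left ideal containing the image under `α`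
of the odd part. -/
lemma coinv_map_mem (K : Submodule k B.carrier) (hK : ∀ a, ∀ x ∈ K, a * x ∈ K)
    (h : ∀ b, A.pe b = 0 → α.toLinearMap b ∈ K) (x : A.carrier) :
    e.coinv (α.toLinearMap x) ∈ K := by
  simp only [coinv, LinearMap.comp_apply, α.map_comul']
  induction A.comul x using TensorProduct.induction_on with
  | zero => simp
  | tmul x y =>
    simp only [TensorProduct.map_tmul, LinearMap.mul'_apply, ← α.map_po]
    exact hK _ _ (h _ (A.pe_po y))
  | add x y hx hy => simp only [map_add]; exact add_mem hx hy

/-! #### Injectivity and surjectivity of a single morphism -/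

include hC hW in
/-- A morphism that is injective on the Harish-Chandra pairs is strictly compatible with the
filtrations by powers of the odd ideals, hence injective. -/
lemma injective_of_pair (hA : A.IsSuperCommutative) (hB : B.IsSuperCommutative)
    (h2 : (2 : k) ≠ 0) (hfg : Algebra.FiniteType k A.carrier) (hfC : Function.Injective m.fC)
    (hgW : Function.Injective m.gW) : Function.Injective α.toLinearMap := by
  have claim : ∀ n a, α.toLinearMap a ∈ B.fil n → a ∈ A.fil n := by
    intro n
    induction n with
    | zero => exact fun a _ => mem_fil_zero a
    | succ n ih =>
      intro a ha
      cases n with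
      | zero =>
        rw [zero_add, ← e.pi_eq_zero_iff, α.pi_map d e m hC] at ha
        exact d.pi_eq_zero_iff.1 ((map_eq_zero_iff _ hfC).1 ha)
      | succ n =>
        refine d.mem_fil_of_D_mem hA h2 n a (ih a (hB.fil_anti_succ _ ha)) fun u => ?_
        obtain ⟨r, hr⟩ := LinearMap.exists_leftInverse_of_injective m.gW
          (LinearMap.ker_eq_bot.2 hgW)
        have hu : (u ∘ₗ r) ∘ₗ m.gW = u := by rw [LinearMap.comp_assoc, hr, LinearMap.comp_id]
        apply ih
        have := d.D_map e α m.gW hW (u ∘ₗ r) a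
        rw [hu] at this
        rw [← this]
        exact e.D_mem_fil hB _ ha
  obtain ⟨N, hN⟩ := hA.exists_fil_eq_bot h2 hfg
  rw [injective_iff_map_eq_zero]
  intro a ha
  have := claim N a (by rw [ha]; exact zero_mem _)
  rwa [hN, Submodule.mem_bot] at this

include hC hW in
lemma surjective_of_pair (hB : B.IsSuperCommutative)
    (h2 : (2 : k) ≠ 0) (hfg : Algebra.FiniteType k B.carrier) (hfC : Function.Surjective m.fC)
    (hgW : Function.Surjective m.gW) : Function.Surjective α.toLinearMap := by
  set R := LinearMap.range α.toLinearMap with hR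
  have hgen : B.fil 1 ≤ ⊤ * A.oddPart.map α.toLinearMap ⊔ B.fil 2 := by
    refine (e.fil_one_le hB R ?_).trans (sup_le_sup_right (Submodule.mul_le.2 ?_) _)
    · rw [hR, ← LinearMap.range_comp, hW, LinearMap.range_eq_top]
      exact hgW.comp d.ϖ_surj
    · rintro a - _ ⟨_, ⟨x, rfl⟩, rfl⟩
      have hl : ∀ a, ∀ x ∈ (⊤ * A.oddPart.map α.toLinearMap : Submodule k B.carrier),
          a * x ∈ (⊤ * A.oddPart.map α.toLinearMap : Submodule k B.carrier) := fun a x hx => by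
        have := Submodule.mul_mem_mul (Submodule.mem_top (x := a)) hx
        rwa [← mul_assoc, top_mul_top'] at this
      refine hl a _ (α.coinv_map_mem e _ hl (fun b hb => ?_) x)
      have := Submodule.mul_mem_mul (Submodule.mem_top (x := (1 : B.carrier)))
        (Submodule.mem_map_of_mem (f := α.toLinearMap) (show b ∈ A.oddPart from hb))
      rwa [one_mul] at this
  have hstep : ∀ n, B.fil n ≤ R ⊔ B.fil (n + 1) := by
    intro n
    induction n with
    | zero =>
      intro b _
      obtain ⟨c, hc⟩ := hfC (e.π b)
      obtain ⟨a, rfl⟩ := d.π_surj c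
      rw [← α.pi_map d e m hC] at hc
      rw [← add_sub_cancel (α.toLinearMap a) b]
      exact Submodule.add_mem_sup ⟨a, rfl⟩ (e.pi_eq_iff.1 hc.symm)
    | succ n ih =>
      rw [fil_succ]
      refine Submodule.mul_le.2 fun f hf o ho => ?_
      obtain ⟨p, hp, q, hq, rfl⟩ := Submodule.mem_sup.1 (hgen (mem_fil_one ho))
      rw [mul_add]
      refine add_mem ?_ (Submodule.mem_sup_right (hB.mul_mem_fil (n := 2) hf hq))
      clear ho hq
      induction hp using Submodule.mul_induction_on' with
      | mem_mul_mem a _ b hb =>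
        obtain ⟨b, hb, rfl⟩ := hb
        obtain ⟨_, ⟨r, rfl⟩, t, ht, h⟩ := Submodule.mem_sup.1 (ih (hB.mul_mem_fil_right a hf))
        rw [← mul_assoc, ← h, add_mul, ← α.map_mul']
        exact Submodule.add_mem_sup ⟨_, rfl⟩ (mul_mem_fil_succ ht (α.map_odd hb))
      | add b _ c _ hb hc => rw [mul_add]; exact add_mem hb hc
  have hall : ∀ n, (⊤ : Submodule k B.carrier) ≤ R ⊔ B.fil n := by
    intro n
    induction n with
    | zero => rw [fil_zero, sup_top_eq]
    | succ n ih => exact ih.trans (sup_le le_sup_left (hstep n))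
  obtain ⟨N, hN⟩ := hB.exists_fil_eq_bot h2 hfg
  have := hall N
  rw [hN, sup_bot_eq, top_le_iff] at this
  exact LinearMap.range_eq_top.1 this

include hC in
lemma fC_surjective (h : Function.Surjective α.toLinearMap) : Function.Surjective m.fC := by
  have := e.π_surj.comp h
  rw [← LinearMap.coe_comp, hC, LinearMap.coe_comp] at this
  exact this.of_comp

include hW in
lemma gW_surjective (h : Function.Surjective α.toLinearMap) : Function.Surjective m.gW := by
  have := e.ϖ_surj.comp h
  rw [← LinearMap.coe_comp, hW, LinearMap.coe_comp] at this
  exact this.of_comp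

/-- The functionals on `Q.W` vanishing on the image of `P.W` have codimension `rank m.gW`. -/
lemma finrank_dual_le :
    Module.finrank k (Q.W →ₗ[k] k) ≤
      Module.finrank k (LinearMap.ker (LinearMap.lcomp k k m.gW)) +
        Module.finrank k (LinearMap.range m.gW) := by
  have := P.fdW
  have := Q.fdW
  have h1 := LinearMap.finrank_range_add_finrank_ker (LinearMap.lcomp k k m.gW)
  have h3 : Module.finrank k (LinearMap.range (LinearMap.lcomp k k m.gW)) =
      Module.finrank k (LinearMap.range m.gW) := LinearMap.finrank_range_dualMap_eq_finrank_range _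
  omega

include hW in
lemma D_map_eq_zero {v : Q.W →ₗ[k] k} (hv : v ∈ LinearMap.ker (LinearMap.lcomp k k m.gW))
    (a : A.carrier) : e.D v (α.toLinearMap a) = 0 := by
  have hv' : v ∘ₗ m.gW = 0 := hv
  rw [d.D_map e α m.gW hW, hv', D_zero, map_zero]

include hW in
/-- Elements of the image of `α` are annihilated by the contractions along a subspace of codimension
`rank m.gW`, so in filtration degree larger than this rank they vanish. -/
lemma map_eq_zero_of_mem_fil (hB : B.IsSuperCommutative) (h2 : (2 : k) ≠ 0)
    (hfg : Algebra.FiniteType k B.carrier) (a : A.carrier)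
    (ha : α.toLinearMap a ∈ B.fil (Module.finrank k (LinearMap.range m.gW) + 1)) :
    α.toLinearMap a = 0 := by
  have hall : ∀ n, α.toLinearMap a ∈ B.fil (Module.finrank k (LinearMap.range m.gW) + 1 + n) := by
    intro n
    induction n with
    | zero => exact ha
    | succ n ih =>
      refine e.mem_fil_of_finrank hB h2 _ _ (Module.finrank k (LinearMap.range m.gW) + n) _
        (finrank_dual_le m) (by omega) (by convert ih using 2; omega) |> fun h => ?_
      have := h fun v hv => by rw [α.D_map_eq_zero d e m hW hv]; exact zero_mem _
      convert this using 2
      omega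
  obtain ⟨N, hN⟩ := hB.exists_fil_eq_bot h2 hfg
  have := hB.fil_anti (Nat.le_add_left N _) (hall N)
  rwa [hN, Submodule.mem_bot] at this

include hW d e in
lemma gW_injective (hA : A.IsSuperCommutative) (hB : B.IsSuperCommutative) (h2 : (2 : k) ≠ 0)
    (hfg : Algebra.FiniteType k B.carrier) (h : Function.Injective α.toLinearMap) :
    Function.Injective m.gW := by
  have := P.fdW
  by_contra hinj
  have hlt : Module.finrank k (LinearMap.range m.gW) < Module.finrank k P.W := by
    have h1 := LinearMap.finrank_range_add_finrank_ker m.gW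
    have h3 : Module.finrank k (LinearMap.ker m.gW) ≠ 0 := fun h0 =>
      hinj (LinearMap.ker_eq_bot.1 (Submodule.finrank_eq_zero.1 h0))
    omega
  have hzero : ∀ f ∈ A.fil (Module.finrank k P.W), f = 0 := fun f hf =>
    (map_eq_zero_iff _ h).1 (α.map_eq_zero_of_mem_fil d e m hW hB h2 hfg f
      (hB.fil_anti hlt (α.map_fil hf)))
  have h1 := d.mem_fil_one_of_mul_top hA 1 fun f hf => by
    rw [hzero f hf, mul_zero]; exact zero_mem _
  rw [← d.pi_eq_zero_iff, d.π_one] at h1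
  have := congrArg (Coalgebra.counit (R := k)) h1
  rw [Bialgebra.counit_one, map_zero] at this
  exact one_ne_zero this

include hC hW in
/-- If `m.fC c₀ = 0` and `c` is a lift of `c₀`, then `c · F^d` with `d = dim P.W` maps into a
filtration degree in which the image of `α` is zero; hence `c · F^d = 0` and `c ∈ F¹`. -/
lemma fC_injective (hA : A.IsSuperCommutative) (hB : B.IsSuperCommutative) (h2 : (2 : k) ≠ 0)
    (hfg : Algebra.FiniteType k B.carrier) (h : Function.Injective α.toLinearMap) :
    Function.Injective m.fC := by
  rw [injective_iff_map_eq_zero]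
  intro c₀ hc₀
  obtain ⟨c, rfl⟩ := d.π_surj c₀
  have claim : ∀ n f r, f ∈ A.fil n → r ∈ A.fil (n + 1) →
      α.toLinearMap (c * f + r) ∈ B.fil (n + 1) := by
    intro n
    induction n with
    | zero =>
      intro f r _ hr
      rw [zero_add, ← e.pi_eq_zero_iff, α.pi_map d e m hC, map_add, d.π_mul,
        d.pi_eq_zero_iff.2 hr, add_zero, m.fC_mul, hc₀, zero_mul]
    | succ n ih =>
      intro f r hf hr
      refine e.mem_fil_of_D_mem hB h2 n _
        (α.map_fil (add_mem (mul_mem_fil_left c hf) (hA.fil_anti_succ _ hr))) fun v => ?_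
      rw [d.D_map e α m.gW hW, map_add, d.D_mul hA, add_assoc]
      refine ih _ _ (d.D_mem_fil hA _ hf) (add_mem ?_ (d.D_mem_fil hA _ hr))
      exact mul_mem_fil_left _ (sgn_mem_fil hf)
  have hle : Module.finrank k (LinearMap.range m.gW) ≤ Module.finrank k P.W :=
    have := P.fdW
    LinearMap.finrank_range_le _
  have h1 := d.mem_fil_one_of_mul_top hA c fun f hf => by
    have h3 := claim _ f 0 hf (zero_mem _)
    rw [add_zero] at h3
    have h4 := α.map_eq_zero_of_mem_fil d e m hW hB h2 hfg _ (hB.fil_anti (by omega) h3)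
    rw [(map_eq_zero_iff _ h).1 h4]
    exact zero_mem _
  exact d.pi_eq_zero_iff.2 h1

end HopfSuperalgebra.Hom

/-! ### Exactness in the middle -/

namespace HopfSuperalgebra.Hom
open HopfSuperalgebra BarPairData

variable {k : Type} [Field k] {A₁ A₂ A₃ : HopfSuperalgebra k} {P₁ P₂ P₃ : HCP k}
  (α₁ : HopfSuperalgebra.Hom A₁ A₂) (α₂ : HopfSuperalgebra.Hom A₂ A₃)
  (d₁ : BarPairData A₁ P₁) (d₂ : BarPairData A₂ P₂) (d₃ : BarPairData A₃ P₃)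
  (m₁ : HCP.Hom P₁ P₂) (m₂ : HCP.Hom P₂ P₃)

/-- The super-ideal `A₂ · α₁(A₁)⁺` generated by the image of the augmentation ideal. -/
def augIdeal : Submodule k A₂.carrier :=
  Submodule.span k {x : A₂.carrier | ∃ a b, x = a * α₁.toLinearMap b ∧ A₁.counit b = 0}

lemma mul_mem_augIdeal_left (a x : A₂.carrier) (hx : x ∈ α₁.augIdeal) : a * x ∈ α₁.augIdeal := by
  induction hx using Submodule.span_induction with
  | mem x hx =>
    obtain ⟨c, b, rfl, hb⟩ := hx
    exact Submodule.subset_span ⟨a * c, b, (mul_assoc _ _ _).symm, hb⟩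
  | zero => simp
  | add x y _ _ hx hy => rw [mul_add]; exact add_mem hx hy
  | smul r x _ hx => rw [mul_smul_comm]; exact Submodule.smul_mem _ _ hx

lemma map_mem_augIdeal {b : A₁.carrier} (hb : A₁.counit b = 0) :
    α₁.toLinearMap b ∈ α₁.augIdeal :=
  Submodule.subset_span ⟨1, b, (one_mul _).symm, hb⟩

lemma mul_mem_augIdeal_right (hA : A₂.IsSuperCommutative) (a x : A₂.carrier)
    (hx : x ∈ α₁.augIdeal) : x * a ∈ α₁.augIdeal := by
  induction hx using Submodule.span_induction with
  | mem x hx =>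
    obtain ⟨c, b, rfl, hb⟩ := hx
    have he : A₂.po (α₁.toLinearMap (A₁.pe b)) = 0 := by rw [α₁.map_pe', A₂.po_pe]
    have ho : α₁.toLinearMap (A₁.po b) * a = A₂.sgn a * α₁.toLinearMap (A₁.po b) := by
      rw [hA.mul_odd _ (α₁.map_odd (A₁.pe_po b)), sgn_sgn]
    rw [mul_assoc]
    apply mul_mem_augIdeal_left
    rw [← A₁.pe_add_po b, map_add, add_mul, hA.1 _ a he, ho]
    exact add_mem
      (mul_mem_augIdeal_left _ _ _ (map_mem_augIdeal _ (by rw [counit_pe, hb])))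
      (mul_mem_augIdeal_left _ _ _ (map_mem_augIdeal _ (counit_po _)))
  | zero => simp
  | add x y _ _ hx hy => rw [add_mul]; exact add_mem hx hy
  | smul r x _ hx => rw [smul_mul_assoc]; exact Submodule.smul_mem _ _ hx

variable (hC₁ : d₂.π ∘ₗ α₁.toLinearMap = m₁.fC ∘ₗ d₁.π)
  (hW₁ : d₂.ϖ ∘ₗ α₁.toLinearMap = m₁.gW ∘ₗ d₁.ϖ)
  (hC₂ : d₃.π ∘ₗ α₂.toLinearMap = m₂.fC ∘ₗ d₂.π)
  (hW₂ : d₃.ϖ ∘ₗ α₂.toLinearMap = m₂.gW ∘ₗ d₂.ϖ)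

/-! #### From the superalgebras to the pairs -/

include d₁ hC₁ in
lemma map_pi_augIdeal :
    α₁.augIdeal.map d₂.π = Submodule.span k
      {x : P₂.C | ∃ a b, x = a * m₁.fC b ∧ Coalgebra.counit (R := k) b = 0} := by
  rw [augIdeal, Submodule.map_span]
  congr 1
  ext x
  constructor
  · rintro ⟨_, ⟨a, b, rfl, hb⟩, rfl⟩
    exact ⟨d₂.π a, d₁.π b, by rw [d₂.π_mul, α₁.pi_map d₁ d₂ m₁ hC₁], by rw [d₁.π_counit, hb]⟩
  · rintro ⟨a, b, rfl, hb⟩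
    obtain ⟨a, rfl⟩ := d₂.π_surj a
    obtain ⟨b, rfl⟩ := d₁.π_surj b
    exact ⟨_, ⟨a, b, rfl, by rw [← d₁.π_counit, hb]⟩, by
      rw [d₂.π_mul, α₁.pi_map d₁ d₂ m₁ hC₁]⟩

lemma exists_odd_lift (h : Function.Surjective α₂.toLinearMap) {c : A₃.carrier}
    (hc : A₃.pe c = 0) : ∃ b, A₂.pe b = 0 ∧ α₂.toLinearMap b = c := by
  obtain ⟨b, rfl⟩ := h c
  exact ⟨A₂.po b, A₂.pe_po b, by rw [map_po, po_of_odd hc]⟩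

lemma exists_even_lift (h : Function.Surjective α₂.toLinearMap) {c : A₃.carrier}
    (hc : A₃.po c = 0) : ∃ b, A₂.po b = 0 ∧ α₂.toLinearMap b = c := by
  obtain ⟨b, rfl⟩ := h c
  exact ⟨A₂.pe b, A₂.po_pe b, by rw [α₂.map_pe', pe_of_even hc]⟩

include hC₂ d₃ in
lemma ker_fC_eq (hsurj : Function.Surjective α₂.toLinearMap) :
    LinearMap.ker m₂.fC = (LinearMap.ker α₂.toLinearMap).map d₂.π := by
  apply le_antisymm
  · intro c hc
    obtain ⟨a, rfl⟩ := d₂.π_surj c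
    rw [LinearMap.mem_ker, ← α₂.pi_map d₂ d₃ m₂ hC₂] at hc
    have h1 : A₃.oddIdeal ≤ A₂.oddIdeal.map α₂.toLinearMap := by
      refine Submodule.span_le.2 ?_
      rintro _ ⟨a, b, hb, rfl⟩
      obtain ⟨a, rfl⟩ := hsurj a
      obtain ⟨b, hb₂, rfl⟩ := α₂.exists_odd_lift hsurj hb
      exact ⟨a * b, Submodule.subset_span ⟨a, b, hb₂, rfl⟩, α₂.map_mul' _ _⟩
    obtain ⟨i, hi, h⟩ := h1 (d₃.π_ker ▸ (show _ ∈ LinearMap.ker d₃.π from hc))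
    refine ⟨a - i, ?_, ?_⟩
    · rw [SetLike.mem_coe, LinearMap.mem_ker, map_sub, h, sub_self]
    · have : d₂.π i = 0 := by rwa [← LinearMap.mem_ker, d₂.π_ker]
      rw [map_sub, this, sub_zero]
  · rintro _ ⟨a, ha, rfl⟩
    rw [LinearMap.mem_ker, ← α₂.pi_map d₂ d₃ m₂ hC₂, LinearMap.mem_ker.1 ha, map_zero]

include d₁ d₂ d₃ hW₁ hW₂ in
lemma range_gW_eq (hA : A₂.IsSuperCommutative) (hsurj : Function.Surjective α₂.toLinearMap)
    (hker : LinearMap.ker α₂.toLinearMap = α₁.augIdeal) :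
    LinearMap.range m₁.gW = LinearMap.ker m₂.gW := by
  apply le_antisymm
  · rintro _ ⟨w, rfl⟩
    obtain ⟨x, rfl⟩ := d₁.ϖ_surj w
    have h1 : α₁.toLinearMap (A₁.po x) ∈ LinearMap.ker α₂.toLinearMap :=
      hker ▸ α₁.map_mem_augIdeal (counit_po x)
    rw [LinearMap.mem_ker, ← d₁.varpi_po, ← α₁.varpi_map d₁ d₂ m₁ hW₁,
      ← α₂.varpi_map d₂ d₃ m₂ hW₂, LinearMap.mem_ker.1 h1, map_zero]
  · intro w hw
    obtain ⟨x, rfl⟩ := d₂.ϖ_surj w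
    rw [LinearMap.mem_ker, ← α₂.varpi_map d₂ d₃ m₂ hW₂, ← LinearMap.mem_ker] at hw
    have h1 : LinearMap.ker d₃.ϖ ≤ (LinearMap.ker d₂.ϖ).map α₂.toLinearMap := by
      rw [d₃.ϖ_ker]
      refine sup_le ?_ (Submodule.span_le.2 ?_)
      · intro c hc
        obtain ⟨b, hb, rfl⟩ := α₂.exists_even_lift hsurj (LinearMap.mem_ker.1 hc)
        exact ⟨b, d₂.varpi_even hb, rfl⟩
      · rintro _ ⟨b, c, hb, hb', hc, rfl⟩
        obtain ⟨b, hb₂, rfl⟩ := α₂.exists_even_lift hsurj hb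
        obtain ⟨c, hc₂, rfl⟩ := α₂.exists_odd_lift hsurj hc
        refine ⟨b * c, ?_, α₂.map_mul' _ _⟩
        rw [SetLike.mem_coe, LinearMap.mem_ker, d₂.varpi_even_mul_odd hb₂ hc₂, ← α₂.map_counit', hb',
          zero_smul]
    obtain ⟨y, hy, hxy⟩ := h1 hw
    have h3 : x - y ∈ α₁.augIdeal := by
      rw [← hker, LinearMap.mem_ker, map_sub, hxy, sub_self]
    have h4 : α₁.augIdeal ≤ (LinearMap.range m₁.gW).comap d₂.ϖ := by
      refine Submodule.span_le.2 ?_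
      rintro _ ⟨a, b, rfl, hb⟩
      rw [SetLike.mem_coe, Submodule.mem_comap, d₂.varpi_mul hA, α₁.map_counit', hb, zero_smul,
        add_zero, α₁.varpi_map d₁ d₂ m₁ hW₁]
      exact Submodule.smul_mem _ _ ⟨_, rfl⟩
    have := h4 h3
    rwa [Submodule.mem_comap, map_sub, LinearMap.mem_ker.1 hy, sub_zero] at this

/-! #### From the pairs to the superalgebras -/

include d₁ d₂ d₃ hC₁ hC₂ hW₁ hW₂ in
lemma augIdeal_le_ker (hA₃ : A₃.IsSuperCommutative) (h2 : (2 : k) ≠ 0)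
    (hfg : Algebra.FiniteType k A₃.carrier)
    (hC : Submodule.span k
      {x : P₂.C | ∃ a b, x = a * m₁.fC b ∧ Coalgebra.counit (R := k) b = 0} ≤ LinearMap.ker m₂.fC)
    (hW : LinearMap.range m₁.gW ≤ LinearMap.ker m₂.gW) :
    α₁.augIdeal ≤ LinearMap.ker α₂.toLinearMap := by
  refine Submodule.span_le.2 ?_
  rintro _ ⟨a, b, rfl, hb⟩
  have hall : ∀ n, α₂.toLinearMap (α₁.toLinearMap b) ∈ A₃.fil n := by
    intro n
    induction n with
    | zero => exact mem_fil_zero _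
    | succ n ih =>
      cases n with
      | zero =>
        rw [zero_add, ← d₃.pi_eq_zero_iff, α₂.pi_map d₂ d₃ m₂ hC₂, α₁.pi_map d₁ d₂ m₁ hC₁]
        exact hC (Submodule.subset_span ⟨1, d₁.π b, (one_mul _).symm, by rw [d₁.π_counit, hb]⟩)
      | succ n =>
        refine d₃.mem_fil_of_D_mem hA₃ h2 n _ ih fun v => ?_
        have hv : (v ∘ₗ m₂.gW) ∘ₗ m₁.gW = 0 := by
          ext w
          have := LinearMap.mem_ker.1 (hW ⟨w, rfl⟩)
          simp [this]
        rw [d₂.D_map d₃ α₂ m₂.gW hW₂, d₁.D_map d₂ α₁ m₁.gW hW₁, hv, D_zero, map_zero, map_zero]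
        exact zero_mem _
  obtain ⟨N, hN⟩ := hA₃.exists_fil_eq_bot h2 hfg
  have := hall N
  rw [hN, Submodule.mem_bot] at this
  rw [SetLike.mem_coe, LinearMap.mem_ker, α₂.map_mul', this, mul_zero]

include d₁ d₂ d₃ hC₁ hC₂ hW₁ hW₂ in
lemma ker_le_augIdeal (hA₂ : A₂.IsSuperCommutative) (hA₃ : A₃.IsSuperCommutative)
    (h2 : (2 : k) ≠ 0) (hfg : Algebra.FiniteType k A₂.carrier)
    (hC : LinearMap.ker m₂.fC ≤ Submodule.span k
      {x : P₂.C | ∃ a b, x = a * m₁.fC b ∧ Coalgebra.counit (R := k) b = 0})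
    (hsurj : Function.Surjective m₂.gW)
    (hW : LinearMap.range m₁.gW = LinearMap.ker m₂.gW) :
    LinearMap.ker α₂.toLinearMap ≤ α₁.augIdeal := by
  have := P₃.fdW
  let b := Module.finBasis k P₃.W
  choose x hx using fun i => (hsurj.comp d₂.ϖ_surj) (b i)
  simp only [Function.comp_apply] at hx
  have hv : ∀ v : P₃.W →ₗ[k] k, (v ∘ₗ m₂.gW) ∘ₗ m₁.gW = 0 := by
    intro v
    ext w
    have : m₂.gW (m₁.gW w) = 0 := LinearMap.mem_ker.1 (hW ▸ ⟨w, rfl⟩)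
    simp [this]
  have hD : ∀ (v : P₃.W →ₗ[k] k), ∀ a ∈ α₁.augIdeal, d₂.D (v ∘ₗ m₂.gW) a ∈ α₁.augIdeal := by
    intro v
    suffices h : α₁.augIdeal ≤ α₁.augIdeal.comap (d₂.D (v ∘ₗ m₂.gW)) from fun a ha => h ha
    refine Submodule.span_le.2 ?_
    rintro _ ⟨a, b, rfl, hb⟩
    rw [SetLike.mem_coe, Submodule.mem_comap, d₂.D_mul hA₂, d₁.D_map d₂ α₁ m₁.gW hW₁, hv, D_zero,
      map_zero, mul_zero, zero_add, ← map_sgn]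
    refine mul_mem_augIdeal_left _ _ _ (map_mem_augIdeal _ ?_)
    rw [sgn, LinearMap.sub_apply, map_sub, counit_pe, counit_po, hb, sub_zero]
  have hT : (Submodule.span k (Set.range x) ⊔ LinearMap.range α₁.toLinearMap).map d₂.ϖ = ⊤ := by
    have h1 : (LinearMap.range α₁.toLinearMap).map d₂.ϖ = LinearMap.ker m₂.gW := by
      rw [← LinearMap.range_comp, hW₁, LinearMap.range_comp, LinearMap.range_eq_top.2 d₁.ϖ_surj,
        Submodule.map_top, hW]
    have h3 : (Submodule.map m₂.gW (Submodule.map d₂.ϖ (Submodule.span k (Set.range x)))) = ⊤ := by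
      rw [Submodule.map_span, Submodule.map_span, ← Set.range_comp, ← Set.range_comp,
        show m₂.gW ∘ d₂.ϖ ∘ x = b from funext hx, b.span_eq]
    rw [Submodule.map_sup, h1, ← Submodule.comap_map_eq, h3, Submodule.comap_top]
  have hTK : (LinearMap.range α₁.toLinearMap).map d₂.coinv ≤ α₁.augIdeal := by
    rintro _ ⟨_, ⟨x, rfl⟩, rfl⟩
    exact α₁.coinv_map_mem d₂ _ α₁.mul_mem_augIdeal_left
      (fun b hb => α₁.map_mem_augIdeal (A₁.counit_odd b hb)) x
  have claim : ∀ n a, α₂.toLinearMap a ∈ A₃.fil n → a ∈ A₂.fil n ⊔ α₁.augIdeal := by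
    intro n
    induction n with
    | zero => exact fun a _ => Submodule.mem_sup_left (mem_fil_zero a)
    | succ n ih =>
      intro a ha
      cases n with
      | zero =>
        rw [zero_add, ← d₃.pi_eq_zero_iff, α₂.pi_map d₂ d₃ m₂ hC₂] at ha
        have h1 := hC (LinearMap.mem_ker.2 ha)
        rw [← α₁.map_pi_augIdeal d₁ d₂ m₁ hC₁] at h1
        obtain ⟨y, hy, hya⟩ := h1
        rw [← sub_add_cancel a y]
        exact Submodule.add_mem_sup (d₂.pi_eq_iff.1 hya.symm) hy
      | succ n =>
        refine d₂.mem_fil_sup_of_D_mem hA₂ h2 α₁.augIdeal α₁.mul_mem_augIdeal_left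
          (α₁.mul_mem_augIdeal_right hA₂) x (fun i => b.coord i ∘ₗ m₂.gW)
          (fun i => by simp [hx]) (fun i j h => by simp [hx, h]) _ hTK hT (fun i => hD _) n a
          (ih a (hA₃.fil_anti_succ _ ha)) fun i => ih _ ?_
        rw [← d₂.D_map d₃ α₂ m₂.gW hW₂]
        exact d₃.D_mem_fil hA₃ _ ha
  obtain ⟨N, hN⟩ := hA₂.exists_fil_eq_bot h2 hfg
  intro a ha
  have := claim N a (by rw [LinearMap.mem_ker.1 ha]; exact zero_mem _)
  rwa [hN, bot_sup_eq] at this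

end HopfSuperalgebra.Hom

/-- Proposition 4.12(3): a sequence
`A(C₁,W₁) → A(C₂,W₂) → A(C₃,W₃)` of affine Hopf superalgebras arising
functorially from a sequence `(C₁,W₁) → (C₂,W₂) → (C₃,W₃)` of Harish-Chandra
pairs is short exact iff the constituent sequences `C₁ → C₂ → C₃` and
`W₁ → W₂ → W₃` are a short exact sequence of commutative Hopf algebras and of
vector spaces, respectively.  Here `Aᵢ` realizes `A(Cᵢ,Wᵢ)` via the bar-pair
data `dᵢ`, and `α₁`, `α₂` are the functorially induced morphisms; short
exactness `A₁ →p A₂ →q A₃` of super-commutative Hopf superalgebras means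
`p` injective, `q` surjective, and `ker q = A₂·p(A₁)⁺`. -/
theorem ACW_shortExact_iff
    (k : Type) [Field k] (hchar : ringChar k ≠ 2)
    (P₁ P₂ P₃ : HCP k) (m₁ : HCP.Hom P₁ P₂) (m₂ : HCP.Hom P₂ P₃)
    (A₁ A₂ A₃ : HopfSuperalgebra k)
    (hA₁ : A₁.IsSuperCommutative ∧ Algebra.FiniteType k A₁.carrier)
    (hA₂ : A₂.IsSuperCommutative ∧ Algebra.FiniteType k A₂.carrier)
    (hA₃ : A₃.IsSuperCommutative ∧ Algebra.FiniteType k A₃.carrier)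
    (d₁ : BarPairData A₁ P₁) (d₂ : BarPairData A₂ P₂) (d₃ : BarPairData A₃ P₃)
    (α₁ : HopfSuperalgebra.Hom A₁ A₂) (α₂ : HopfSuperalgebra.Hom A₂ A₃)
    -- α₁, α₂ are the morphisms induced functorially by m₁, m₂:
    (hα₁C : d₂.π ∘ₗ α₁.toLinearMap = m₁.fC ∘ₗ d₁.π)
    (hα₁W : d₂.ϖ ∘ₗ α₁.toLinearMap = m₁.gW ∘ₗ d₁.ϖ)
    (hα₂C : d₃.π ∘ₗ α₂.toLinearMap = m₂.fC ∘ₗ d₂.π)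
    (hα₂W : d₃.ϖ ∘ₗ α₂.toLinearMap = m₂.gW ∘ₗ d₂.ϖ) :
    (Function.Injective α₁.toLinearMap ∧ Function.Surjective α₂.toLinearMap ∧
      LinearMap.ker α₂.toLinearMap = Submodule.span k
        {x : A₂.carrier | ∃ a b, x = a * α₁.toLinearMap b ∧ A₁.counit b = 0}) ↔
    ((Function.Injective m₁.fC ∧ Function.Surjective m₂.fC ∧
      LinearMap.ker m₂.fC = Submodule.span k
        {x : P₂.C | ∃ a b, x = a * m₁.fC b ∧ Coalgebra.counit (R := k) b = 0}) ∧
     (Function.Injective m₁.gW ∧ Function.Surjective m₂.gW ∧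
      LinearMap.range m₁.gW = LinearMap.ker m₂.gW)) := by
  have h2 : (2 : k) ≠ 0 := Ring.two_ne_zero hchar
  obtain ⟨hs₁, hf₁⟩ := hA₁
  obtain ⟨hs₂, hf₂⟩ := hA₂
  obtain ⟨hs₃, hf₃⟩ := hA₃
  constructor
  · rintro ⟨hi, hs, hk⟩
    change _ = α₁.augIdeal at hk
    refine ⟨⟨α₁.fC_injective d₁ d₂ m₁ hα₁C hα₁W hs₁ hs₂ h2 hf₂ hi,
      α₂.fC_surjective d₂ d₃ m₂ hα₂C hs, ?_⟩,
      α₁.gW_injective d₁ d₂ m₁ hα₁W hs₁ hs₂ h2 hf₂ hi, α₂.gW_surjective d₂ d₃ m₂ hα₂W hs,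
      HopfSuperalgebra.Hom.range_gW_eq α₁ α₂ d₁ d₂ d₃ m₁ m₂ hα₁W hα₂W hs₂ hs hk⟩
    rw [α₂.ker_fC_eq d₂ d₃ m₂ hα₂C hs, hk, α₁.map_pi_augIdeal d₁ d₂ m₁ hα₁C]
  · rintro ⟨⟨hiC, hsC, hkC⟩, hiW, hsW, hkW⟩
    refine ⟨α₁.injective_of_pair d₁ d₂ m₁ hα₁C hα₁W hs₁ hs₂ h2 hf₁ hiC hiW,
      α₂.surjective_of_pair d₂ d₃ m₂ hα₂C hα₂W hs₃ h2 hf₃ hsC hsW, le_antisymm ?_ ?_⟩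
    · exact α₁.ker_le_augIdeal α₂ d₁ d₂ d₃ m₁ m₂ hα₁C hα₁W hα₂C hα₂W hs₂ hs₃ h2 hf₂ hkC.le hsW hkW
    · exact α₁.augIdeal_le_ker α₂ d₁ d₂ d₃ m₁ m₂ hα₁C hα₁W hα₂C hα₂W hs₃ h2 hf₃ hkC.ge hkW.le

end
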